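/- Let α > 0, H ∈ (0, 1/2], 0 ≤ t ≤ T < T+Θ. Let μ be a Gaussian probability measure on C([T,T+Θ], ℝ) with mean function m(u) = −2α²∫_t^T (u−s)^{2H−1} ds and covariance function C(u,v) = 4α²∫_t^T (u−s)^{H−1/2}(v−s)^{H−1/2} ds. Let f : ℝ → ℝ be Lipschitz and x : [T,T+Θ] → [0,∞) bounded measurable, and let F = ∫ f((1/Θ)∫_T^{T+Θ} x(u) e^{z(u)} du) μ(dz). Then: (i) for the rectangle scheme on the uniform grid tᵢⁿ = T + Θ·i/n, with η_n(u) = max{tᵢⁿ : tᵢⁿ ≤ u} and Fₙ = ∫ f((1/Θ)∫_T^{T+Θ} x(u) e^{z(η_n(u))} du) μ(dz), there is a constant C with |F − Fₙ| ≤ C/n for all n; (ii) for any κ > 0 with κ(H+1) > 2, for the trapezoidal scheme on the grid tᵢⁿ = T + Θ(i/n)^κ, with η̄_n(u) = min{tᵢⁿ : tᵢⁿ > u}, θ_n(u) = (η̄_n(u) − u)/(η̄_n(u) − η_n(u)), and F̂ₙ = ∫ f((1/Θ)∫_T^{T+Θ} x(u)[θ_n(u) e^{z(η_n(u))} + (1−θ_n(u))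 e^{z(η̄_n(u))}] du) μ(dz), there is a constant C with |F − F̂ₙ| ≤ C/n² for all n. -/

import Mathlib

open MeasureTheory ProbabilityTheory Real
open scoped NNReal

/-- A Gaussian measure on a normed space: the pushforward under every continuous linear
functional is Gaussian on `ℝ`. -/
def IsGaussianMeasureOn {E : Type*} [NormedAddCommGroup E] [NormedSpace ℝ E]
    [MeasurableSpace E] (μ : Measure E) : Prop :=
  ∀ L : E →L[ℝ] ℝ, ∃ (mL : ℝ) (vL : ℝ≥0), μ.map L = gaussianReal mL vL

/-- The largest point of the uniform grid `{T + Θ·i/n}` lying below `u`. -/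
noncomputable def unifGridPoint (T Θ : ℝ) (n : ℕ) (u : ℝ) : ℝ :=
  T + Θ * (⌊(u - T) * n / Θ⌋ : ℤ) / n

/-- Index of the largest point of the stretched grid `{T + Θ(i/n)^κ}` lying below `u`. -/
noncomputable def stretchIdx (T Θ κ : ℝ) (n : ℕ) (u : ℝ) : ℤ :=
  ⌊(n : ℝ) * ((u - T) / Θ) ^ (1 / κ)⌋

/-- The largest point `η_n(u)` of the stretched grid `{T + Θ(i/n)^κ}` with `η_n(u) ≤ u`. -/
noncomputable def stretchLow (T Θ κ : ℝ) (n : ℕ) (u : ℝ) : ℝ :=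
  T + Θ * ((stretchIdx T Θ κ n u : ℝ) / n) ^ κ

/-- The smallest point `η̄_n(u)` of the stretched grid `{T + Θ(i/n)^κ}` with `η̄_n(u) > u`. -/
noncomputable def stretchHigh (T Θ κ : ℝ) (n : ℕ) (u : ℝ) : ℝ :=
  T + Θ * (((stretchIdx T Θ κ n u : ℝ) + 1) / n) ^ κ

/-- The interpolation weight `θ_n(u) = (η̄_n(u) − u)/(η̄_n(u) − η_n(u))`. -/
noncomputable def stretchTheta (T Θ κ : ℝ) (n : ℕ) (u : ℝ) : ℝ :=
  (stretchHigh T Θ κ n u - u) / (stretchHigh T Θ κ n u - stretchLow T Θ κ n u)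

lemma rb_iadd {Ω : Type*} [MeasurableSpace Ω] {μ : Measure Ω} {f g : Ω → ℝ}
    (hf : Integrable f μ) (hg : Integrable g μ) : Integrable (fun a => f a + g a) μ := hf.add hg

lemma rb_imul {Ω : Type*} [MeasurableSpace Ω] {μ : Measure Ω} {f g : Ω → ℝ}
    (hf : MemLp f 2 μ) (hg : MemLp g 2 μ) : Integrable (fun a => f a * g a) μ :=
  hf.integrable_mul hg

lemma rb_cs {Ω : Type*} [MeasurableSpace Ω] {μ : Measure Ω} {f g : Ω → ℝ}
    (hf : MemLp f 2 μ) (hg : MemLp g 2 μ) :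
    ∫ a, |f a * g a| ∂μ ≤ √(∫ a, f a ^ 2 ∂μ) * √(∫ a, g a ^ 2 ∂μ) := by
  have h := integral_mul_norm_le_Lp_mul_Lq (μ := μ) (f := f) (g := g)
    Real.HolderConjugate.two_two (by simpa using hf) (by simpa using hg)
  simp only [Real.norm_eq_abs, ← abs_mul, Real.rpow_two, sq_abs, ← Real.sqrt_eq_rpow] at h
  exact h

/-- Moments of a Gaussian variable. -/
lemma rb_gauss_second {Ω : Type*} [MeasurableSpace Ω] {μ : Measure Ω} [IsProbabilityMeasure μ]
    {X : Ω → ℝ} {m : ℝ} {v : ℝ≥0} (hX : Measurable X) (h : μ.map X = gaussianReal m v) :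
    ∫ a, X a ^ 2 ∂μ = m ^ 2 + v := by
  have h1 : ∫ a, X a ^ 2 ∂μ = ∫ y, y ^ 2 ∂(gaussianReal m v) := by
    rw [← h, integral_map hX.aemeasurable (by fun_prop)]
  have h2 := variance_fun_id_gaussianReal (μ := m) (v := v)
  have h3 : MemLp (fun x : ℝ => x) 2 (gaussianReal m v) := memLp_id_gaussianReal 2
  rw [variance_eq_sub h3] at h2
  simp only [Pi.pow_apply, integral_id_gaussianReal] at h2
  rw [h1]; linarith

lemma rb_gauss_memLp {Ω : Type*} [MeasurableSpace Ω] {μ : Measure Ω}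
    {X : Ω → ℝ} {m : ℝ} {v : ℝ≥0} (hX : Measurable X) (h : μ.map X = gaussianReal m v) (p : ℝ≥0) :
    MemLp X p μ := by
  have := memLp_id_gaussianReal (μ := m) (v := v) p
  rw [← h] at this
  exact (memLp_map_measure_iff (by fun_prop) hX.aemeasurable).1 this

lemma rb_gauss_exp_integrable {Ω : Type*} [MeasurableSpace Ω] {μ : Measure Ω}
    {X : Ω → ℝ} {m : ℝ} {v : ℝ≥0} (hX : Measurable X) (h : μ.map X = gaussianReal m v) (c : ℝ) :
    Integrable (fun a => exp (c * X a)) μ := by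
  have := integrable_exp_mul_gaussianReal (μ := m) (v := v) c
  rw [← h] at this
  exact (integrable_map_measure (by fun_prop) hX.aemeasurable).1 this

lemma rb_gauss_exp {Ω : Type*} [MeasurableSpace Ω] {μ : Measure Ω}
    {X : Ω → ℝ} {m : ℝ} {v : ℝ≥0} (h : μ.map X = gaussianReal m v) (c : ℝ) :
    ∫ a, exp (c * X a) ∂μ = exp (m * c + v * c ^ 2 / 2) := 
  mgf_gaussianReal h c

lemma rb_gauss_fourth {Ω : Type*} [MeasurableSpace Ω] {μ : Measure Ω} [IsProbabilityMeasure μ]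
    {X : Ω → ℝ} {m : ℝ} {v : ℝ≥0} (hX : Measurable X) (h : μ.map X = gaussianReal m v) :
    ∫ a, X a ^ 4 ∂μ ≤ 48 * exp 2 * (∫ a, X a ^ 2 ∂μ) ^ 2 := by
  have h2 := rb_gauss_second hX h
  have hv : (0:ℝ) ≤ v := v.2
  have hs0 : 0 ≤ ∫ a, X a ^ 2 ∂μ := integral_nonneg fun a => sq_nonneg _
  rcases eq_or_lt_of_le hs0 with h0 | hpos
  · have hi : Integrable (fun a => X a ^ 2) μ := (rb_gauss_memLp hX h 2).integrable_sq
    have := (integral_eq_zero_iff_of_nonneg (fun a => sq_nonneg (X a)) hi).1 h0.symm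
    have h4 : ∫ a, X a ^ 4 ∂μ = 0 := by
      apply integral_eq_zero_of_ae
      filter_upwards [this] with a ha
      have : X a ^ 2 = 0 := ha
      simp only [Pi.zero_apply]
      calc X a ^ 4 = (X a ^ 2) ^ 2 := by ring
        _ = 0 := by rw [this]; simp
    rw [h4]; positivity
  · set s := √(∫ a, X a ^ 2 ∂μ) with hs
    have hsp : 0 < s := Real.sqrt_pos.2 hpos
    have hss : s ^ 2 = ∫ a, X a ^ 2 ∂μ := Real.sq_sqrt hs0
    have key : ∀ y : ℝ, y ^ 4 ≤ 24 * s ^ 4 * (exp (s⁻¹ * y) + exp (-s⁻¹ * y)) := by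
      intro y
      have e1 := Real.pow_div_factorial_le_exp _ (abs_nonneg (s⁻¹ * y)) 4
      have e2 : exp |s⁻¹ * y| ≤ exp (s⁻¹ * y) + exp (-s⁻¹ * y) := by
        rcases abs_choice (s⁻¹ * y) with h | h <;> rw [h]
        · linarith [exp_pos (-s⁻¹ * y)]
        · rw [← neg_mul]; linarith [exp_pos (s⁻¹ * y)]
      have e3 : |s⁻¹ * y| ^ 4 = y ^ 4 / s ^ 4 := by
        rw [pow_abs, abs_of_nonneg (by positivity)]; field_simp
      have e4 : ((Nat.factorial 4 : ℕ) : ℝ) = 24 := by norm_num [Nat.factorial]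
      rw [e3, e4] at e1
      have e5 : y ^ 4 / s ^ 4 / 24 ≤ exp (s⁻¹ * y) + exp (-s⁻¹ * y) := e1.trans e2
      rw [div_div, div_le_iff₀ (by positivity)] at e5
      linarith
    have hexp : ∀ c : ℝ, |c| = s⁻¹ → ∫ a, exp (c * X a) ∂μ ≤ exp 2 := by
      intro c hc
      rw [rb_gauss_exp h]
      apply exp_le_exp.2
      have hc2 : c ^ 2 * (m ^ 2 + v) = 1 := by
        rw [← h2, ← hss, ← sq_abs, hc]; field_simp
      nlinarith [sq_nonneg (m * c - 1), mul_nonneg (sq_nonneg c) hv, sq_nonneg (m * c)]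
    have i1 := rb_gauss_exp_integrable hX h s⁻¹
    have i2 := rb_gauss_exp_integrable hX h (-s⁻¹)
    calc ∫ a, X a ^ 4 ∂μ ≤ ∫ a, 24 * s ^ 4 * (exp (s⁻¹ * X a) + exp (-s⁻¹ * X a)) ∂μ := by
          apply integral_mono_of_nonneg
          · exact Filter.Eventually.of_forall fun a => by positivity
          · exact (i1.add i2).const_mul _
          · exact Filter.Eventually.of_forall fun a => key _
      _ = 24 * s ^ 4 * (∫ a, exp (s⁻¹ * X a) ∂μ + ∫ a, exp (-s⁻¹ * X a) ∂μ) := by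
          rw [integral_const_mul, integral_add i1 i2]
      _ ≤ 24 * s ^ 4 * (exp 2 + exp 2) := by
          gcongr
          · exact hexp _ (abs_of_pos (by positivity))
          · exact hexp _ (by rw [abs_neg]; exact abs_of_pos (by positivity))
      _ = 48 * exp 2 * (s ^ 2) ^ 2 := by ring
      _ = _ := by rw [hss]

lemma rb_exp_sub_one_sub (p : ℝ) : |exp p - 1 - p| ≤ p ^ 2 * (1 + exp p) := by
  have h1 := add_one_le_exp p
  have h2 := add_one_le_exp (-p)
  rw [abs_of_nonneg (by linarith)]
  have h3 : exp p * exp (-p) = 1 := by rw [← exp_add]; simp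
  have hp := exp_pos p
  -- exp p - 1 ≤ p * exp p
  have h4 : exp p - 1 ≤ p * exp p := by nlinarith
  rcases le_total 0 p with h | h
  · nlinarith [mul_nonneg h h, mul_le_mul_of_nonneg_left h4 h]
  · have h5 : exp p ≤ 1 := exp_le_one_iff.2 h
    nlinarith [mul_nonneg_of_nonpos_of_nonpos h h, sq_nonneg p]

lemma rb_delta (θ w za zb : ℝ) (h0 : 0 ≤ θ) (h1 : θ ≤ 1) :
    |θ * exp za + (1 - θ) * exp zb - exp w| ≤
      |exp w * (θ * za + (1 - θ) * zb + (-1) * w)|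
      + (za - w) ^ 2 * (exp w + exp za) + (zb - w) ^ 2 * (exp w + exp zb) := by
  have ha := rb_exp_sub_one_sub (za - w)
  have hb := rb_exp_sub_one_sub (zb - w)
  have ea : exp za = exp w * exp (za - w) := by rw [← exp_add]; congr 1; ring
  have eb : exp zb = exp w * exp (zb - w) := by rw [← exp_add]; congr 1; ring
  have hw := exp_pos w
  have e : θ * exp za + (1 - θ) * exp zb - exp w =
      exp w * (θ * za + (1 - θ) * zb + (-1) * w) + (θ * (exp w * (exp (za - w) - 1 - (za - w)))
      + (1 - θ) * (exp w * (exp (zb - w) - 1 - (zb - w)))) := by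
    rw [ea, eb]; ring
  rw [e]
  refine (abs_add_le _ _).trans ?_
  refine (add_le_add le_rfl (abs_add_le _ _)).trans ?_
  have hassoc : ∀ x y z : ℝ, x + y + z = x + (y + z) := fun x y z => add_assoc x y z
  rw [hassoc |_|]
  refine add_le_add le_rfl ?_
  have aux : ∀ t p y : ℝ, 0 ≤ t → t ≤ 1 → |y| ≤ p ^ 2 * (1 + exp p) →
      |t * (exp w * y)| ≤ p ^ 2 * (exp w + exp w * exp p) := by
    intro t p y h0 h1 hy
    rw [abs_mul, abs_mul, abs_of_nonneg h0, abs_of_pos hw]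
    calc t * (exp w * |y|) ≤ 1 * (exp w * (p ^ 2 * (1 + exp p))) := by gcongr
      _ = _ := by ring
  rw [ea, eb]
  exact add_le_add (aux _ _ _ h0 h1 ha) (aux _ _ _ (by linarith) (by linarith) hb)

/-- Abstract data: a Gaussian process with log-normal normalisation and Gram kernel. -/
structure RBData {S Ω : Type*} [MeasurableSpace Ω] (μ : Measure Ω) (ν : Measure ℝ)
    (Z : S → Ω → ℝ) (φ : S → ℝ → ℝ) (B : ℝ) : Prop where
  meas : ∀ u, Measurable (Z u)
  gauss : ∀ (c₁ c₂ c₃ : ℝ) (a b u : S), ∃ (m : ℝ) (v : ℝ≥0),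
    μ.map (fun z => c₁ * Z a z + c₂ * Z b z + c₃ * Z u z) = gaussianReal m v
  memLp : ∀ u, MemLp (φ u) 2 ν
  mean : ∀ u, ∫ z, Z u z ∂μ = -(1 / 2) * ∫ s, φ u s ^ 2 ∂ν
  cov : ∀ u v, ∫ z, (Z u z - -(1 / 2) * ∫ s, φ u s ^ 2 ∂ν)
      * (Z v z - -(1 / 2) * ∫ s, φ v s ^ 2 ∂ν) ∂μ = ∫ s, φ u s * φ v s ∂ν
  bound : ∀ u, ∫ s, φ u s ^ 2 ∂ν ≤ B

section
set_option linter.unusedSectionVars false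
variable {S Ω : Type*} [MeasurableSpace Ω] {μ : Measure Ω} [IsProbabilityMeasure μ]
  {ν : Measure ℝ} {Z : S → Ω → ℝ} {φ : S → ℝ → ℝ} {B : ℝ}

lemma RBData.gauss1 (D : RBData μ ν Z φ B) (u : S) : ∃ (m : ℝ) (v : ℝ≥0),
    μ.map (Z u) = gaussianReal m v := by
  obtain ⟨m, v, h⟩ := D.gauss 1 0 0 u u u
  exact ⟨m, v, by simpa using h⟩

lemma RBData.memLpZ (D : RBData μ ν Z φ B) (u : S) : MemLp (Z u) 2 μ := by
  obtain ⟨m, v, h⟩ := D.gauss1 u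
  exact rb_gauss_memLp (D.meas u) h 2

lemma RBData.second (D : RBData μ ν Z φ B) (c₁ c₂ c₃ : ℝ) (a b u : S) :
    ∫ z, (c₁ * Z a z + c₂ * Z b z + c₃ * Z u z) ^ 2 ∂μ =
      ∫ s, (c₁ * φ a s + c₂ * φ b s + c₃ * φ u s) ^ 2 ∂ν
      + (-(1 / 2) * (c₁ * ∫ s, φ a s ^ 2 ∂ν + c₂ * ∫ s, φ b s ^ 2 ∂ν + c₃ * ∫ s, φ u s ^ 2 ∂ν)) ^ 2 := by
  set ma := -(1 / 2) * ∫ s, φ a s ^ 2 ∂ν with hma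
  set mb := -(1 / 2) * ∫ s, φ b s ^ 2 ∂ν with hmb
  set mu := -(1 / 2) * ∫ s, φ u s ^ 2 ∂ν with hmu
  have Ma := D.memLpZ a
  have Mb := D.memLpZ b
  have Mu := D.memLpZ u
  have Ca : MemLp (fun z => Z a z - ma) 2 μ := Ma.sub (memLp_const _)
  have Cb : MemLp (fun z => Z b z - mb) 2 μ := Mb.sub (memLp_const _)
  have Cu : MemLp (fun z => Z u z - mu) 2 μ := Mu.sub (memLp_const _)
  have z1 : ∀ (w : S), ∫ z, (Z w z - -(1 / 2) * ∫ s, φ w s ^ 2 ∂ν) ∂μ = 0 := by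
    intro w
    rw [integral_sub ((D.memLpZ w).integrable (by norm_num)) (integrable_const _), D.mean w]
    simp
  have e1 : ∀ z, (c₁ * Z a z + c₂ * Z b z + c₃ * Z u z) ^ 2 =
      c₁ ^ 2 * ((Z a z - ma) * (Z a z - ma)) + c₂ ^ 2 * ((Z b z - mb) * (Z b z - mb))
      + c₃ ^ 2 * ((Z u z - mu) * (Z u z - mu)) + 2 * c₁ * c₂ * ((Z a z - ma) * (Z b z - mb))
      + 2 * c₁ * c₃ * ((Z a z - ma) * (Z u z - mu)) + 2 * c₂ * c₃ * ((Z b z - mb) * (Z u z - mu))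
      + 2 * c₁ * (c₁ * ma + c₂ * mb + c₃ * mu) * (Z a z - ma)
      + 2 * c₂ * (c₁ * ma + c₂ * mb + c₃ * mu) * (Z b z - mb)
      + 2 * c₃ * (c₁ * ma + c₂ * mb + c₃ * mu) * (Z u z - mu)
      + (c₁ * ma + c₂ * mb + c₃ * mu) ^ 2 := by intro z; ring
  have e2 : ∀ s, (c₁ * φ a s + c₂ * φ b s + c₃ * φ u s) ^ 2 =
      c₁ ^ 2 * (φ a s * φ a s) + c₂ ^ 2 * (φ b s * φ b s) + c₃ ^ 2 * (φ u s * φ u s)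
      + 2 * c₁ * c₂ * (φ a s * φ b s) + 2 * c₁ * c₃ * (φ a s * φ u s)
      + 2 * c₂ * c₃ * (φ b s * φ u s) := by intro s; ring
  simp_rw [e1, e2]
  have I1 := (rb_imul Ca Ca).const_mul (c₁ ^ 2)
  have I2 := (rb_imul Cb Cb).const_mul (c₂ ^ 2)
  have I3 := (rb_imul Cu Cu).const_mul (c₃ ^ 2)
  have I4 := (rb_imul Ca Cb).const_mul (2 * c₁ * c₂)
  have I5 := (rb_imul Ca Cu).const_mul (2 * c₁ * c₃)
  have I6 := (rb_imul Cb Cu).const_mul (2 * c₂ * c₃)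
  have I7 := (Ca.integrable (by norm_num)).const_mul (2 * c₁ * (c₁ * ma + c₂ * mb + c₃ * mu))
  have I8 := (Cb.integrable (by norm_num)).const_mul (2 * c₂ * (c₁ * ma + c₂ * mb + c₃ * mu))
  have I9 := (Cu.integrable (by norm_num)).const_mul (2 * c₃ * (c₁ * ma + c₂ * mb + c₃ * mu))
  have I10 : Integrable (fun _ : Ω => (c₁ * ma + c₂ * mb + c₃ * mu) ^ 2) μ := integrable_const _
  have J1 := (rb_imul (D.memLp a) (D.memLp a)).const_mul (c₁ ^ 2)
  have J2 := (rb_imul (D.memLp b) (D.memLp b)).const_mul (c₂ ^ 2)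
  have J3 := (rb_imul (D.memLp u) (D.memLp u)).const_mul (c₃ ^ 2)
  have J4 := (rb_imul (D.memLp a) (D.memLp b)).const_mul (2 * c₁ * c₂)
  have J5 := (rb_imul (D.memLp a) (D.memLp u)).const_mul (2 * c₁ * c₃)
  have J6 := (rb_imul (D.memLp b) (D.memLp u)).const_mul (2 * c₂ * c₃)
  rw [integral_add (rb_iadd (rb_iadd (rb_iadd (rb_iadd (rb_iadd (rb_iadd (rb_iadd (rb_iadd I1 I2) I3) I4) I5) I6) I7) I8) I9) I10,
    integral_add (rb_iadd (rb_iadd (rb_iadd (rb_iadd (rb_iadd (rb_iadd (rb_iadd I1 I2) I3) I4) I5) I6) I7) I8) I9,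
    integral_add (rb_iadd (rb_iadd (rb_iadd (rb_iadd (rb_iadd (rb_iadd I1 I2) I3) I4) I5) I6) I7) I8,
    integral_add (rb_iadd (rb_iadd (rb_iadd (rb_iadd (rb_iadd I1 I2) I3) I4) I5) I6) I7,
    integral_add (rb_iadd (rb_iadd (rb_iadd (rb_iadd I1 I2) I3) I4) I5) I6,
    integral_add (rb_iadd (rb_iadd (rb_iadd I1 I2) I3) I4) I5,
    integral_add (rb_iadd (rb_iadd I1 I2) I3) I4,
    integral_add (rb_iadd I1 I2) I3,
    integral_add I1 I2,
    integral_add (rb_iadd (rb_iadd (rb_iadd (rb_iadd J1 J2) J3) J4) J5) J6,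
    integral_add (rb_iadd (rb_iadd (rb_iadd J1 J2) J3) J4) J5,
    integral_add (rb_iadd (rb_iadd J1 J2) J3) J4,
    integral_add (rb_iadd J1 J2) J3,
    integral_add J1 J2]
  simp only [integral_const_mul]
  rw [D.cov a a, D.cov b b, D.cov u u, D.cov a b, D.cov a u, D.cov b u, z1 a, z1 b, z1 u,
    integral_const]
  simp only [hma, hmb, hmu, probReal_univ, smul_eq_mul]
  ring

lemma RBData.exp2_integrable (D : RBData μ ν Z φ B) (u : S) :
    Integrable (fun z => exp (Z u z) ^ 2) μ := by
  obtain ⟨m, v, h⟩ := D.gauss1 u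
  have := rb_gauss_exp_integrable (D.meas u) h 2
  refine this.congr (Filter.Eventually.of_forall fun z => ?_)
  simp only
  rw [← exp_nat_mul]; norm_num

lemma RBData.exp_memLp (D : RBData μ ν Z φ B) (u : S) : MemLp (fun z => exp (Z u z)) 2 μ :=
  (memLp_two_iff_integrable_sq (by have := D.meas u; fun_prop)).2 (D.exp2_integrable u)

lemma RBData.exp2 (D : RBData μ ν Z φ B) (u : S) :
    ∫ z, exp (Z u z) ^ 2 ∂μ ≤ exp B := by
  obtain ⟨m, v, h⟩ := D.gauss1 u
  have e1 : ∫ z, exp (Z u z) ^ 2 ∂μ = ∫ z, exp (2 * Z u z) ∂μ := by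
    congr 1; ext z; rw [← exp_nat_mul]; norm_num
  rw [e1, rb_gauss_exp h]
  apply exp_le_exp.2
  have hm : ∫ z, Z u z ∂μ = m := by
    have : ∫ z, Z u z ∂μ = ∫ y, y ∂(μ.map (Z u)) := by
      rw [integral_map (D.meas u).aemeasurable (by fun_prop)]
    rw [this, h, integral_id_gaussianReal]
  have h2 := rb_gauss_second (D.meas u) h
  have h3 := D.second 1 0 0 u u u
  simp only [one_mul, zero_mul, add_zero] at h3
  rw [h2, ← D.mean u, hm] at h3
  have h4 := D.mean u
  have h5 := D.bound u
  rw [hm] at h4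
  linarith

/-- squared `L²`-distance of kernels, first order -/
noncomputable def rbD1 (ν : Measure ℝ) (φ : S → ℝ → ℝ) (a u : S) : ℝ := ∫ s, (φ a s - φ u s) ^ 2 ∂ν

/-- squared `L²`-norm of the interpolation error -/
noncomputable def rbD2 (ν : Measure ℝ) (φ : S → ℝ → ℝ) (θ : ℝ) (a b u : S) : ℝ :=
  ∫ s, (θ * φ a s + (1 - θ) * φ b s + (-1) * φ u s) ^ 2 ∂ν

lemma rbD1_nonneg (a u : S) : 0 ≤ rbD1 ν φ a u := integral_nonneg fun _ => sq_nonneg _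
lemma rbD2_nonneg (θ : ℝ) (a b u : S) : 0 ≤ rbD2 ν φ θ a b u := integral_nonneg fun _ => sq_nonneg _

lemma RBData.B_nonneg (D : RBData μ ν Z φ B) (u : S) : 0 ≤ B :=
  (integral_nonneg fun _ => sq_nonneg _).trans (D.bound u)

lemma RBData.D1_le (D : RBData μ ν Z φ B) (a u : S) : rbD1 ν φ a u ≤ 4 * B := by
  have I1 := (D.memLp a).integrable_sq
  have I2 := (D.memLp u).integrable_sq
  calc rbD1 ν φ a u ≤ ∫ s, (2 * φ a s ^ 2 + 2 * φ u s ^ 2) ∂ν := by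
        apply integral_mono_of_nonneg (Filter.Eventually.of_forall fun s => sq_nonneg _)
          (rb_iadd (I1.const_mul 2) (I2.const_mul 2))
        exact Filter.Eventually.of_forall fun s => by
          simp only; nlinarith [sq_nonneg (φ a s + φ u s)]
    _ = 2 * ∫ s, φ a s ^ 2 ∂ν + 2 * ∫ s, φ u s ^ 2 ∂ν := by
        rw [integral_add (I1.const_mul 2) (I2.const_mul 2), integral_const_mul, integral_const_mul]
    _ ≤ 4 * B := by linarith [D.bound a, D.bound u]

lemma RBData.D2_le (D : RBData μ ν Z φ B) {θ : ℝ} (h0 : 0 ≤ θ) (h1 : θ ≤ 1) (a b u : S) :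
    rbD2 ν φ θ a b u ≤ rbD1 ν φ a u + rbD1 ν φ b u := by
  have I1 := ((D.memLp a).sub (D.memLp u)).integrable_sq
  have I2 := ((D.memLp b).sub (D.memLp u)).integrable_sq
  simp only [Pi.sub_apply] at I1 I2
  unfold rbD1
  rw [← integral_add I1 I2]
  apply integral_mono_of_nonneg (Filter.Eventually.of_forall fun s => sq_nonneg _) (rb_iadd I1 I2)
  refine Filter.Eventually.of_forall fun s => ?_
  simp only
  have e : θ * φ a s + (1 - θ) * φ b s + (-1) * φ u s
    = θ * (φ a s - φ u s) + (1 - θ) * (φ b s - φ u s) := by ring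
  rw [e]
  generalize φ a s - φ u s = p
  generalize φ b s - φ u s = q
  have hh : 0 ≤ θ * (1 - θ) := mul_nonneg h0 (by linarith)
  nlinarith [mul_nonneg hh (sq_nonneg (p - q)), mul_nonneg h0 (sq_nonneg q),
    mul_nonneg (sub_nonneg.2 h1) (sq_nonneg p)]

lemma RBData.mean_diff2 (D : RBData μ ν Z φ B) {θ : ℝ} (h0 : 0 ≤ θ) (h1 : θ ≤ 1) (a b u : S) :
    |θ * ∫ s, φ a s ^ 2 ∂ν + (1 - θ) * ∫ s, φ b s ^ 2 ∂ν + (-1) * ∫ s, φ u s ^ 2 ∂ν| ≤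
      2 * (√B * √(rbD2 ν φ θ a b u)) + rbD1 ν φ a u + rbD1 ν φ b u := by
  have I1 := ((D.memLp a).sub (D.memLp u)).integrable_sq
  have I2 := ((D.memLp b).sub (D.memLp u)).integrable_sq
  have Ml : MemLp (fun s => θ * φ a s + (1 - θ) * φ b s + (-1) * φ u s) 2 ν :=
    (((D.memLp a).const_mul θ).add ((D.memLp b).const_mul (1 - θ))).add ((D.memLp u).const_mul (-1))
  have I3 := rb_imul (D.memLp u) Ml
  simp only [Pi.sub_apply] at I1 I2
  have hcs := rb_cs (D.memLp u) Ml
  have e : θ * ∫ s, φ a s ^ 2 ∂ν + (1 - θ) * ∫ s, φ b s ^ 2 ∂ν + (-1) * ∫ s, φ u s ^ 2 ∂ν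
      = 2 * (∫ s, φ u s * (θ * φ a s + (1 - θ) * φ b s + (-1) * φ u s) ∂ν)
        + θ * rbD1 ν φ a u + (1 - θ) * rbD1 ν φ b u := by
    unfold rbD1
    rw [← integral_const_mul, ← integral_const_mul, ← integral_const_mul, ← integral_const_mul,
      ← integral_const_mul, ← integral_const_mul,
      ← integral_add (((D.memLp a).integrable_sq).const_mul _)
        (((D.memLp b).integrable_sq).const_mul _),
      ← integral_add (rb_iadd (((D.memLp a).integrable_sq).const_mul _)
        (((D.memLp b).integrable_sq).const_mul _)) (((D.memLp u).integrable_sq).const_mul _),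
      ← integral_add (I3.const_mul _) (I1.const_mul _),
      ← integral_add (rb_iadd (I3.const_mul _) (I1.const_mul _)) (I2.const_mul _)]
    congr 1; ext s; ring
  rw [e]
  have hi : |∫ s, φ u s * (θ * φ a s + (1 - θ) * φ b s + (-1) * φ u s) ∂ν| ≤
      √B * √(rbD2 ν φ θ a b u) := by
    refine abs_integral_le_integral_abs.trans (hcs.trans ?_)
    unfold rbD2
    gcongr
    exact D.bound u
  have n1 := rbD1_nonneg (ν := ν) (φ := φ) a u
  have n2 := rbD1_nonneg (ν := ν) (φ := φ) b u
  refine (abs_add_le _ _).trans ?_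
  refine (add_le_add (abs_add_le _ _) le_rfl).trans ?_
  rw [abs_mul, abs_of_nonneg (mul_nonneg h0 n1), abs_two,
    abs_of_nonneg (mul_nonneg (sub_nonneg.2 h1) n2)]
  have := mul_nonneg (sub_nonneg.2 h1) n1
  have := mul_nonneg h0 n2
  nlinarith

lemma RBData.mean_diff1 (D : RBData μ ν Z φ B) (a u : S) :
    (∫ s, φ a s ^ 2 ∂ν - ∫ s, φ u s ^ 2 ∂ν) ^ 2 ≤ 4 * B * rbD1 ν φ a u := by
  have Mm := (D.memLp a).sub (D.memLp u)
  have Mp := (D.memLp a).add (D.memLp u)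
  have hcs := rb_cs Mm Mp
  simp only [Pi.sub_apply, Pi.add_apply] at hcs
  have hB := D.B_nonneg u
  have hp : ∫ s, (φ a s + φ u s) ^ 2 ∂ν ≤ 4 * B := by
    have I1 := (D.memLp a).integrable_sq
    have I2 := (D.memLp u).integrable_sq
    calc ∫ s, (φ a s + φ u s) ^ 2 ∂ν ≤ ∫ s, (2 * φ a s ^ 2 + 2 * φ u s ^ 2) ∂ν := by
          apply integral_mono_of_nonneg (Filter.Eventually.of_forall fun s => sq_nonneg _)
            (rb_iadd (I1.const_mul 2) (I2.const_mul 2))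
          exact Filter.Eventually.of_forall fun s => by
            simp only; nlinarith [sq_nonneg (φ a s - φ u s)]
      _ = 2 * ∫ s, φ a s ^ 2 ∂ν + 2 * ∫ s, φ u s ^ 2 ∂ν := by
          rw [integral_add (I1.const_mul 2) (I2.const_mul 2), integral_const_mul,
            integral_const_mul]
      _ ≤ 4 * B := by linarith [D.bound a, D.bound u]
  have e : ∫ s, φ a s ^ 2 ∂ν - ∫ s, φ u s ^ 2 ∂ν = ∫ s, (φ a s - φ u s) * (φ a s + φ u s) ∂ν := by
    rw [← integral_sub (D.memLp a).integrable_sq (D.memLp u).integrable_sq]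
    congr 1; ext s; ring
  rw [e]
  have h1 : |∫ s, (φ a s - φ u s) * (φ a s + φ u s) ∂ν| ≤ √(rbD1 ν φ a u) * √(4 * B) := by
    refine abs_integral_le_integral_abs.trans (hcs.trans ?_)
    unfold rbD1
    gcongr
  have n1 := rbD1_nonneg (ν := ν) (φ := φ) a u
  rw [← sq_abs]
  calc _ ≤ (√(rbD1 ν φ a u) * √(4 * B)) ^ 2 := by gcongr
    _ = _ := by rw [mul_pow, Real.sq_sqrt n1, Real.sq_sqrt (by positivity)]; ring

lemma RBData.fourth (D : RBData μ ν Z φ B) (a u : S) :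
    MemLp (fun z => (Z a z - Z u z) ^ 2) 2 μ ∧
    √(∫ z, ((Z a z - Z u z) ^ 2) ^ 2 ∂μ) ≤ √(48 * exp 2) * ((1 + B) * rbD1 ν φ a u) := by
  obtain ⟨m, v, h⟩ := D.gauss 1 0 (-1) a a u
  have hm : Measurable fun z => 1 * Z a z + 0 * Z a z + (-1) * Z u z := by
    have := D.meas a; have := D.meas u; fun_prop
  have h4 := rb_gauss_fourth hm h
  have hM := rb_gauss_memLp hm h 4
  have hs := D.second 1 0 (-1) a a u
  have es : ∀ z, 1 * Z a z + 0 * Z a z + (-1) * Z u z = Z a z - Z u z := by intro z; ring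
  have ef : ∀ z, 1 * φ a z + 0 * φ a z + (-1) * φ u z = φ a z - φ u z := by intro z; ring
  simp only [es, ef] at h4 hs hM hm
  constructor
  · rw [memLp_two_iff_integrable_sq (hm.pow_const 2).aestronglyMeasurable]
    have := hM.integrable_norm_pow (by norm_num)
    refine this.congr (Filter.Eventually.of_forall fun z => ?_)
    simp only [← pow_mul, Real.norm_eq_abs]
    exact Even.pow_abs (by decide) _
  · have hmd := D.mean_diff1 a u
    have n1 := rbD1_nonneg (ν := ν) (φ := φ) a u
    have hB := D.B_nonneg u
    have h2 : ∫ z, (Z a z - Z u z) ^ 2 ∂μ ≤ (1 + B) * rbD1 ν φ a u := by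
      rw [hs]
      change rbD1 ν φ a u + _ ≤ _
      nlinarith
    have h0 : 0 ≤ ∫ z, (Z a z - Z u z) ^ 2 ∂μ := integral_nonneg fun _ => sq_nonneg _
    simp only [← pow_mul]
    calc _ ≤ √(48 * exp 2 * (∫ z, (Z a z - Z u z) ^ 2 ∂μ) ^ 2) := Real.sqrt_le_sqrt h4
      _ = √(48 * exp 2) * ∫ z, (Z a z - Z u z) ^ 2 ∂μ := by
        rw [Real.sqrt_mul (by positivity), Real.sqrt_sq h0]
      _ ≤ _ := by gcongr

lemma RBData.main (D : RBData μ ν Z φ B) {θ : ℝ} (h0 : 0 ≤ θ) (h1 : θ ≤ 1) (a b u : S) :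
    ∫ z, |θ * exp (Z a z) + (1 - θ) * exp (Z b z) - exp (Z u z)| ∂μ ≤
      √(exp B) * (1 + √B + 2 * √(48 * exp 2) * (1 + B)) *
        (√(rbD2 ν φ θ a b u) + rbD1 ν φ a u + rbD1 ν φ b u) := by
  obtain ⟨m, v, h⟩ := D.gauss θ (1 - θ) (-1) a b u
  have hm : Measurable fun z => θ * Z a z + (1 - θ) * Z b z + (-1) * Z u z := by
    have := D.meas a; have := D.meas b; have := D.meas u; fun_prop
  have hlM : MemLp _ 2 μ := rb_gauss_memLp hm h 2
  have hs := D.second θ (1 - θ) (-1) a b u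
  obtain ⟨pM, p4⟩ := D.fourth a u
  obtain ⟨qM, q4⟩ := D.fourth b u
  have hmd := D.mean_diff2 h0 h1 a b u
  set d2 := rbD2 ν φ θ a b u with hd2
  set da := rbD1 ν φ a u with hda
  set db := rbD1 ν φ b u with hdb
  have n2 : 0 ≤ d2 := rbD2_nonneg _ _ _ _
  have na : 0 ≤ da := rbD1_nonneg _ _
  have nb : 0 ≤ db := rbD1_nonneg _ _
  have hB := D.B_nonneg u
  have hl : √(∫ z, (θ * Z a z + (1 - θ) * Z b z + (-1) * Z u z) ^ 2 ∂μ) ≤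
      √d2 + (√B * √d2 + da + db) := by
    rw [hs]
    change √(d2 + _) ≤ _
    apply Real.sqrt_le_iff.2 ⟨by positivity, ?_⟩
    have hsq : √d2 ^ 2 = d2 := Real.sq_sqrt n2
    have hX : (-(1 / 2) * (θ * ∫ s, φ a s ^ 2 ∂ν + (1 - θ) * ∫ s, φ b s ^ 2 ∂ν
        + (-1) * ∫ s, φ u s ^ 2 ∂ν)) ^ 2 ≤ (√B * √d2 + da + db) ^ 2 := by
      rw [← sq_abs, abs_mul]
      have : |(-(1/2) : ℝ)| = 1 / 2 := by norm_num
      rw [this]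
      gcongr
      linarith
    have : 0 ≤ √d2 * (√B * √d2 + da + db) := by positivity
    nlinarith
  have cs1 := rb_cs (D.exp_memLp u) hlM
  have cs2 := rb_cs pM (D.exp_memLp u)
  have cs3 := rb_cs pM (D.exp_memLp a)
  have cs4 := rb_cs qM (D.exp_memLp u)
  have cs5 := rb_cs qM (D.exp_memLp b)
  have i1 := (rb_imul (D.exp_memLp u) hlM).abs
  have i2 := (rb_imul pM (D.exp_memLp u)).abs
  have i3 := (rb_imul pM (D.exp_memLp a)).abs
  have i4 := (rb_imul qM (D.exp_memLp u)).abs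
  have i5 := (rb_imul qM (D.exp_memLp b)).abs
  have sB : ∀ w, √(∫ z, exp (Z w z) ^ 2 ∂μ) ≤ √(exp B) := fun w => Real.sqrt_le_sqrt (D.exp2 w)
  set K := √(48 * exp 2) with hK
  calc _ ≤ ∫ z, (|exp (Z u z) * (θ * Z a z + (1 - θ) * Z b z + (-1) * Z u z)|
        + |(Z a z - Z u z) ^ 2 * exp (Z u z)| + |(Z a z - Z u z) ^ 2 * exp (Z a z)|
        + |(Z b z - Z u z) ^ 2 * exp (Z u z)| + |(Z b z - Z u z) ^ 2 * exp (Z b z)|) ∂μ := by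
        apply integral_mono_of_nonneg (Filter.Eventually.of_forall fun s => abs_nonneg _)
          (rb_iadd (rb_iadd (rb_iadd (rb_iadd i1 i2) i3) i4) i5)
        refine Filter.Eventually.of_forall fun z => ?_
        simp only
        have := rb_delta θ (Z u z) (Z a z) (Z b z) h0 h1
        rw [abs_of_nonneg (by positivity : 0 ≤ (Z a z - Z u z) ^ 2 * exp (Z u z)),
          abs_of_nonneg (by positivity : 0 ≤ (Z a z - Z u z) ^ 2 * exp (Z a z)),
          abs_of_nonneg (by positivity : 0 ≤ (Z b z - Z u z) ^ 2 * exp (Z u z)),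
          abs_of_nonneg (by positivity : 0 ≤ (Z b z - Z u z) ^ 2 * exp (Z b z))]
        linarith
    _ = _ := by
        rw [integral_add (rb_iadd (rb_iadd (rb_iadd i1 i2) i3) i4) i5, integral_add (rb_iadd (rb_iadd i1 i2) i3) i4,
          integral_add (rb_iadd i1 i2) i3, integral_add i1 i2]
    _ ≤ √(exp B) * (√d2 + (√B * √d2 + da + db)) + K * ((1 + B) * da) * √(exp B)
        + K * ((1 + B) * da) * √(exp B) + K * ((1 + B) * db) * √(exp B)
        + K * ((1 + B) * db) * √(exp B) := by
        refine add_le_add (add_le_add (add_le_add (add_le_add ?_ ?_) ?_) ?_) ?_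
        · exact cs1.trans (mul_le_mul (sB u) hl (Real.sqrt_nonneg _) (Real.sqrt_nonneg _))
        · exact cs2.trans (mul_le_mul p4 (sB u) (Real.sqrt_nonneg _) (by positivity))
        · exact cs3.trans (mul_le_mul p4 (sB a) (Real.sqrt_nonneg _) (by positivity))
        · exact cs4.trans (mul_le_mul q4 (sB u) (Real.sqrt_nonneg _) (by positivity))
        · exact cs5.trans (mul_le_mul q4 (sB b) (Real.sqrt_nonneg _) (by positivity))
    _ ≤ _ := by
        have r1 : 0 ≤ √(exp B) * (√B * (da + db)) := by positivity
        have r2 : 0 ≤ √(exp B) * (2 * K * (1 + B) * √d2) := by positivity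
        nlinarith

end

lemma rb_tangent {γ x r : ℝ} (hγ : γ ≤ 0) (hx : 0 < x) (hr : 0 < r) :
    r ^ γ + γ * r ^ (γ - 1) * (x - r) ≤ x ^ γ := by
  have h1 : 1 + γ * (x / r - 1) ≤ (x / r) ^ γ := by
    have hy : 0 < x / r := by positivity
    rw [Real.rpow_def_of_pos hy]
    have := Real.log_le_sub_one_of_pos hy
    have := Real.add_one_le_exp (Real.log (x / r) * γ)
    nlinarith
  rw [Real.div_rpow hx.le hr.le, le_div_iff₀ (by positivity)] at h1
  rw [Real.rpow_sub_one hr.ne']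
  calc _ = (1 + γ * (x / r - 1)) * r ^ γ := by field_simp
    _ ≤ _ := h1

lemma rb_pt1 {γ a u : ℝ} (hγ : γ ≤ 0) (hγ2 : -(1/2) ≤ γ) (ha : 0 < a) (hau : a ≤ u) :
    0 ≤ a ^ γ - u ^ γ ∧ a ^ γ - u ^ γ ≤ a ^ (γ - 1) * (u - a) := by
  constructor
  · exact sub_nonneg.2 (Real.rpow_le_rpow_of_nonpos ha hau hγ)
  · have := rb_tangent hγ (ha.trans_le hau) ha
    have h2 : 0 ≤ a ^ (γ - 1) * (u - a) := mul_nonneg (by positivity) (by linarith)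
    nlinarith

lemma rb_pt2 {γ a b u θ : ℝ} (hγ : γ ≤ 0) (hγ2 : -(1/2) ≤ γ) (ha : 0 < a) (hau : a ≤ u)
    (hub : u ≤ b) (h0 : 0 ≤ θ) (h1 : θ ≤ 1) (hθ : θ * a + (1 - θ) * b = u) :
    0 ≤ θ * a ^ γ + (1 - θ) * b ^ γ + (-1) * u ^ γ ∧
    θ * a ^ γ + (1 - θ) * b ^ γ + (-1) * u ^ γ ≤ (b - a) ^ 2 * a ^ (γ - 2) := by
  have hu : 0 < u := ha.trans_le hau
  have hb : 0 < b := hu.trans_le hub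
  have h1' : 0 ≤ 1 - θ := by linarith
  constructor
  · have e1 := mul_le_mul_of_nonneg_left (rb_tangent hγ ha hu) h0
    have e2 := mul_le_mul_of_nonneg_left (rb_tangent hγ hb hu) h1'
    have e3 : θ * (u ^ γ + γ * u ^ (γ - 1) * (a - u)) + (1 - θ) * (u ^ γ + γ * u ^ (γ - 1) * (b - u))
      = u ^ γ + γ * u ^ (γ - 1) * (θ * a + (1 - θ) * b - u) := by ring
    rw [hθ] at e3
    nlinarith
  · have e1 := rb_tangent hγ hu ha
    have e2 := mul_le_mul_of_nonneg_left (rb_tangent hγ ha hb) h1'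
    have e4 : (1 - θ) * (b - a) = u - a := by rw [← hθ]; ring
    have e3 := rb_tangent (γ := γ - 1) (by linarith) hb ha
    rw [show γ - 1 - 1 = γ - 2 by ring] at e3
    have e5 : θ * a ^ γ + (1 - θ) * b ^ γ + (-1) * u ^ γ ≤
        (u - a) * (-γ) * (a ^ (γ - 1) - b ^ (γ - 1)) := by
      have : (1 - θ) * (b ^ γ + γ * b ^ (γ - 1) * (a - b)) =
        (1 - θ) * b ^ γ - γ * b ^ (γ - 1) * (u - a) := by rw [← e4]; ring
      rw [this] at e2
      nlinarith
    have hp : 0 < a ^ (γ - 2) := by positivity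
    have e6 : a ^ (γ - 1) - b ^ (γ - 1) ≤ (1 - γ) * a ^ (γ - 2) * (b - a) := by linarith
    have e7 : 0 ≤ (u - a) * (-γ) := mul_nonneg (by linarith) (by linarith)
    refine (e5.trans (mul_le_mul_of_nonneg_left e6 e7)).trans ?_
    have e8 : (-γ) * (1 - γ) ≤ 1 := by nlinarith
    have e9 : 0 ≤ (u - a) * (b - a) * a ^ (γ - 2) :=
      mul_nonneg (mul_nonneg (by linarith) (by linarith)) hp.le
    have e10 : (u - a) * (b - a) * a ^ (γ - 2) ≤ (b - a) ^ 2 * a ^ (γ - 2) := by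
      rw [sq]; gcongr; linarith
    calc (u - a) * -γ * ((1 - γ) * a ^ (γ - 2) * (b - a))
        = ((-γ) * (1 - γ)) * ((u - a) * (b - a) * a ^ (γ - 2)) := by ring
      _ ≤ 1 * ((u - a) * (b - a) * a ^ (γ - 2)) := by gcongr
      _ ≤ _ := by linarith

/-- The kernel. -/
noncomputable def rbk (α H u s : ℝ) : ℝ := 2 * α * (u - s) ^ (H - 1 / 2)

/-- The integration measure. -/
noncomputable def rbν (t T : ℝ) : Measure ℝ := volume.restrict (Set.Icc t T)

lemma rb_int_rpow {t T a q : ℝ} (htT : t ≤ T) (h : -1 < q ∨ q ≠ -1 ∧ T < a) :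
    ∫ s, (a - s) ^ q ∂(rbν t T) = ((a - t) ^ (q + 1) - (a - T) ^ (q + 1)) / (q + 1) := by
  unfold rbν
  rw [integral_Icc_eq_integral_Ioc, ← intervalIntegral.integral_of_le htT,
    intervalIntegral.integral_comp_sub_left (fun x => x ^ q) a, integral_rpow]
  rcases h with h | h
  · exact Or.inl h
  · refine Or.inr ⟨h.1, ?_⟩
    rw [Set.uIcc_of_le (by linarith)]
    intro h0
    linarith [h0.1, h.2]

lemma rb_integrable_rpow {t T a q : ℝ} (htT : t ≤ T) (h : -1 < q ∨ T < a) :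
    Integrable (fun s => (a - s) ^ q) (rbν t T) := by
  unfold rbν
  have : IntervalIntegrable (fun x : ℝ => x ^ q) volume (a - t) (a - T) := by
    rcases h with h | h
    · exact intervalIntegral.intervalIntegrable_rpow' h
    · apply intervalIntegral.intervalIntegrable_rpow
      right
      rw [Set.uIcc_of_ge (by linarith)]
      intro h0
      linarith [h0.1, h]
  have h2 := this.comp_sub_left a
  simp only [sub_sub_cancel] at h2
  rw [intervalIntegrable_iff_integrableOn_Ioc_of_le htT] at h2
  exact (integrableOn_Icc_iff_integrableOn_Ioc).2 h2

lemma rb_int_rpow_le {t T a q : ℝ} (htT : t ≤ T) (hq : q ≤ -2) (ha : T < a) :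
    ∫ s, (a - s) ^ q ∂(rbν t T) ≤ (a - T) ^ (q + 1) := by
  rw [rb_int_rpow htT (Or.inr ⟨by linarith, ha⟩)]
  rw [div_le_iff_of_neg (by linarith)]
  have h1 : 0 < (a - T) ^ (q + 1) := Real.rpow_pos_of_pos (by linarith) _
  have h2 : 0 < (a - t) ^ (q + 1) := Real.rpow_pos_of_pos (by linarith) _
  nlinarith

lemma rbk_sq {α H u s : ℝ} (h : 0 ≤ u - s) :
    rbk α H u s ^ 2 = 4 * α ^ 2 * (u - s) ^ (2 * H - 1) := by
  unfold rbk
  rw [mul_pow, ← Real.rpow_mul_natCast h]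
  norm_num
  ring_nf

lemma rbν_ae {t T : ℝ} : ∀ᵐ s ∂(rbν t T), s < T := by
  unfold rbν
  rw [← Measure.restrict_congr_set (Ico_ae_eq_Icc (μ := volume) (a := t) (b := T))]
  filter_upwards [ae_restrict_mem measurableSet_Ico] with s hs using hs.2

lemma rbk_meas (α H u : ℝ) : Measurable (rbk α H u) := by unfold rbk; fun_prop

lemma rbk_int_sq {α H t T u : ℝ} (hH0 : 0 < H) (htT : t ≤ T) (hu : T ≤ u) :
    ∫ s, rbk α H u s ^ 2 ∂(rbν t T)
      = 4 * α ^ 2 * (((u - t) ^ (2 * H) - (u - T) ^ (2 * H)) / (2 * H)) := by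
  have : ∫ s, rbk α H u s ^ 2 ∂(rbν t T) = ∫ s, 4 * α ^ 2 * (u - s) ^ (2 * H - 1) ∂(rbν t T) := by
    apply integral_congr_ae
    filter_upwards [rbν_ae] with s hs
    exact rbk_sq (by linarith)
  rw [this, integral_const_mul, rb_int_rpow htT (Or.inl (by linarith)), sub_add_cancel]

lemma rbk_integrable_sq {α H t T u : ℝ} (hH0 : 0 < H) (htT : t ≤ T) (hu : T ≤ u) :
    Integrable (fun s => rbk α H u s ^ 2) (rbν t T) := by
  have := (rb_integrable_rpow (a := u) (q := 2 * H - 1) htT (Or.inl (by linarith))).const_mul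
    (4 * α ^ 2)
  refine this.congr ?_
  filter_upwards [rbν_ae] with s hs
  exact (rbk_sq (by linarith)).symm

lemma rbk_memLp {α H t T u : ℝ} (hH0 : 0 < H) (htT : t ≤ T) (hu : T ≤ u) :
    MemLp (rbk α H u) 2 (rbν t T) :=
  (memLp_two_iff_integrable_sq (rbk_meas α H u).aestronglyMeasurable).2
    (rbk_integrable_sq hH0 htT hu)

lemma rb_subadd {x y p : ℝ} (hx : 0 ≤ x) (hy : 0 ≤ y) (hp : 0 < p) (hp1 : p ≤ 1) :
    (x + y) ^ p ≤ x ^ p + y ^ p := Real.rpow_add_le_add_rpow hx hy hp.le hp1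

lemma rbk_bound {α H t T u : ℝ} (hH0 : 0 < H) (hH : H ≤ 1 / 2) (htT : t ≤ T) (hu : T ≤ u) :
    ∫ s, rbk α H u s ^ 2 ∂(rbν t T) ≤ 4 * α ^ 2 * ((T - t) ^ (2 * H) / (2 * H)) := by
  rw [rbk_int_sq hH0 htT hu]
  have := rb_subadd (x := u - T) (y := T - t) (p := 2 * H) (by linarith) (by linarith)
    (by linarith) (by linarith)
  rw [sub_add_sub_cancel] at this
  gcongr
  linarith

lemma rbk_D1_a {α H t T a u : ℝ} (hα : 0 < α) (hH0 : 0 < H) (hH : H ≤ 1 / 2) (htT : t ≤ T)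
    (ha : T ≤ a) (hau : a ≤ u) :
    rbD1 (rbν t T) (rbk α H) a u ≤ 4 * α ^ 2 / (2 * H) * (u - a) ^ (2 * H) := by
  have Ia := rbk_integrable_sq (α := α) hH0 htT ha
  have Iu := rbk_integrable_sq (α := α) hH0 htT (ha.trans hau)
  have h1 : rbD1 (rbν t T) (rbk α H) a u ≤
      ∫ s, (rbk α H a s ^ 2 - rbk α H u s ^ 2) ∂(rbν t T) := by
    unfold rbD1
    apply integral_mono_of_nonneg (Filter.Eventually.of_forall fun s => sq_nonneg _) (Ia.sub Iu)
    filter_upwards [rbν_ae] with s hs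
    have h2 : rbk α H u s ≤ rbk α H a s := by
      unfold rbk
      have := Real.rpow_le_rpow_of_nonpos (x := a - s) (y := u - s) (z := H - 1 / 2)
        (by linarith) (by linarith) (by linarith)
      gcongr
    have h3 : 0 ≤ rbk α H u s := by
      unfold rbk
      have : 0 ≤ (u - s) ^ (H - 1 / 2) := Real.rpow_nonneg (by linarith) _
      positivity
    change (rbk α H a s - rbk α H u s) ^ 2 ≤ rbk α H a s ^ 2 - rbk α H u s ^ 2
    nlinarith
  refine h1.trans ?_
  rw [integral_sub Ia Iu, rbk_int_sq hH0 htT ha, rbk_int_sq hH0 htT (ha.trans hau)]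
  have s1 := rb_subadd (x := u - a) (y := a - T) (p := 2 * H) (by linarith) (by linarith)
    (by linarith) (by linarith)
  rw [sub_add_sub_cancel] at s1
  have s2 : (a - t) ^ (2 * H) ≤ (u - t) ^ (2 * H) := by
    apply Real.rpow_le_rpow <;> linarith
  calc _ = 4 * α ^ 2 / (2 * H) * ((a - t) ^ (2 * H) - (a - T) ^ (2 * H)
        - ((u - t) ^ (2 * H) - (u - T) ^ (2 * H))) := by ring
    _ ≤ _ := by gcongr; linarith

lemma rbk_D1_b {α H t T a u : ℝ} (hH0 : 0 < H) (hH : H ≤ 1 / 2) (htT : t ≤ T)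
    (ha : T < a) (hau : a ≤ u) :
    rbD1 (rbν t T) (rbk α H) a u ≤ 4 * α ^ 2 * ((u - a) ^ 2 * (a - T) ^ (2 * H - 2)) := by
  have I := rb_integrable_rpow (q := 2 * H - 3) htT (Or.inr ha)
  have h1 : rbD1 (rbν t T) (rbk α H) a u ≤
      ∫ s, 4 * α ^ 2 * (u - a) ^ 2 * (a - s) ^ (2 * H - 3) ∂(rbν t T) := by
    unfold rbD1
    apply integral_mono_of_nonneg (Filter.Eventually.of_forall fun s => sq_nonneg _) (I.const_mul _)
    filter_upwards [rbν_ae] with s hs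
    obtain ⟨p0, p1⟩ := rb_pt1 (γ := H - 1 / 2) (a := a - s) (u := u - s) (by linarith)
      (by linarith) (by linarith) (by linarith)
    have e : rbk α H a s - rbk α H u s = 2 * α * ((a - s) ^ (H - 1/2) - (u - s) ^ (H - 1/2)) := by
      unfold rbk; ring
    have e2 : (a - s) ^ (2 * H - 3) = ((a - s) ^ (H - 1/2 - 1)) ^ 2 := by
      rw [← Real.rpow_mul_natCast (by linarith)]; norm_num; ring_nf
    simp only [e, e2]
    rw [show u - s - (a - s) = u - a by ring] at p1
    calc _ = 4 * α ^ 2 * ((a - s) ^ (H - 1/2) - (u - s) ^ (H - 1/2)) ^ 2 := by ring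
      _ ≤ 4 * α ^ 2 * ((a - s) ^ (H - 1/2 - 1) * (u - a)) ^ 2 := by gcongr
      _ = _ := by ring
  refine h1.trans ?_
  rw [integral_const_mul, mul_assoc]
  have := rb_int_rpow_le (q := 2 * H - 3) htT (by linarith) ha
  rw [show 2 * H - 3 + 1 = 2 * H - 2 by ring] at this
  gcongr

lemma rbk_D2 {α H t T a b u θ : ℝ} (hH0 : 0 < H) (hH : H ≤ 1 / 2) (htT : t ≤ T)
    (ha : T < a) (hau : a ≤ u) (hub : u ≤ b) (h0 : 0 ≤ θ) (h1 : θ ≤ 1)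
    (hθ : θ * a + (1 - θ) * b = u) :
    rbD2 (rbν t T) (rbk α H) θ a b u ≤ 4 * α ^ 2 * ((b - a) ^ 4 * (a - T) ^ (2 * H - 4)) := by
  have I := rb_integrable_rpow (q := 2 * H - 5) htT (Or.inr ha)
  have h1 : rbD2 (rbν t T) (rbk α H) θ a b u ≤
      ∫ s, 4 * α ^ 2 * (b - a) ^ 4 * (a - s) ^ (2 * H - 5) ∂(rbν t T) := by
    unfold rbD2
    apply integral_mono_of_nonneg (Filter.Eventually.of_forall fun s => sq_nonneg _) (I.const_mul _)
    filter_upwards [rbν_ae] with s hs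
    obtain ⟨p0, p1⟩ := rb_pt2 (γ := H - 1 / 2) (a := a - s) (b := b - s) (u := u - s) (θ := θ)
      (by linarith)
      (by linarith) (by linarith) (by linarith) (by linarith) h0 h1 (by rw [← hθ]; ring)
    have e : θ * rbk α H a s + (1 - θ) * rbk α H b s + (-1) * rbk α H u s
      = 2 * α * (θ * (a - s) ^ (H - 1/2) + (1 - θ) * (b - s) ^ (H - 1/2)
        + (-1) * (u - s) ^ (H - 1/2)) := by
      unfold rbk; ring
    have e2 : (a - s) ^ (2 * H - 5) = ((a - s) ^ (H - 1/2 - 2)) ^ 2 := by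
      rw [← Real.rpow_mul_natCast (by linarith)]; norm_num; ring_nf
    simp only [e, e2]
    rw [show b - s - (a - s) = b - a by ring] at p1
    rw [mul_pow (2 * α)]
    calc _ ≤ (2 * α) ^ 2 * ((b - a) ^ 2 * (a - s) ^ (H - 1/2 - 2)) ^ 2 := by gcongr
      _ = _ := by ring
  refine h1.trans ?_
  rw [integral_const_mul, mul_assoc]
  have := rb_int_rpow_le (q := 2 * H - 5) htT (by linarith) ha
  rw [show 2 * H - 5 + 1 = 2 * H - 4 by ring] at this
  gcongr

lemma rbD1_symm {S : Type*} {ν : Measure ℝ} {φ : S → ℝ → ℝ} (a u : S) :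
    rbD1 ν φ a u = rbD1 ν φ u a := by
  unfold rbD1; congr 1; ext s; ring

section
variable {Ω : Type*} [MeasurableSpace Ω] {μ : Measure Ω} [IsProbabilityMeasure μ]
  {α H t T Θ B : ℝ} {Z : Set.Icc T (T + Θ) → Ω → ℝ}

/-- Constant of the main bound. -/
noncomputable def rbK (B : ℝ) : ℝ := √(exp B) * (1 + √B + 2 * √(48 * exp 2) * (1 + B))

lemma rbK_nonneg (hB : 0 ≤ B) : 0 ≤ rbK B := by unfold rbK; positivity

lemma rb_trap_far (D : RBData μ (rbν t T) Z (fun u => rbk α H (u : ℝ)) B)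
    (hα : 0 < α) (hH0 : 0 < H) (hH : H ≤ 1 / 2) (htT : t ≤ T)
    {θ : ℝ} (h0 : 0 ≤ θ) (h1 : θ ≤ 1) (a b u : Set.Icc T (T + Θ)) (ha : T < (a : ℝ))
    (hau : (a : ℝ) ≤ u) (hub : (u : ℝ) ≤ b) (hθ : θ * a + (1 - θ) * b = (u : ℝ)) :
    ∫ z, |θ * exp (Z a z) + (1 - θ) * exp (Z b z) - exp (Z u z)| ∂μ ≤
      rbK B * (2 * α + 8 * α ^ 2 * Θ ^ H) * (((b : ℝ) - a) ^ 2 * ((a : ℝ) - T) ^ (H - 2)) := by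
  have hB := D.B_nonneg u
  have hK := rbK_nonneg hB
  have e1 : rbD2 (rbν t T) (fun u : Set.Icc T (T + Θ) => rbk α H (u : ℝ)) θ a b u ≤ _ :=
    rbk_D2 (α := α) hH0 hH htT ha hau hub h0 h1 hθ
  have e2 : rbD1 (rbν t T) (fun u : Set.Icc T (T + Θ) => rbk α H (u : ℝ)) a u ≤ _ :=
    rbk_D1_b (α := α) hH0 hH htT ha hau
  have e3 : rbD1 (rbν t T) (fun u : Set.Icc T (T + Θ) => rbk α H (u : ℝ)) b u ≤ _ :=
    (rbD1_symm b u).trans_le (rbk_D1_b (α := α) hH0 hH htT (ha.trans_le hau) hub)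
  refine (D.main h0 h1 a b u).trans ?_
  change rbK B * _ ≤ _
  rw [mul_assoc]
  refine mul_le_mul_of_nonneg_left ?_ hK
  have haT : 0 < (a : ℝ) - T := by linarith
  have r1 : √(rbD2 (rbν t T) (fun u : Set.Icc T (T + Θ) => rbk α H (u : ℝ)) θ a b u) ≤
      2 * α * (((b : ℝ) - a) ^ 2 * ((a : ℝ) - T) ^ (H - 2)) := by
    apply Real.sqrt_le_iff.2 ⟨by positivity, e1.trans (le_of_eq ?_)⟩
    have : ((a : ℝ) - T) ^ (2 * H - 4) = (((a : ℝ) - T) ^ (H - 2)) ^ 2 := by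
      rw [← Real.rpow_mul_natCast haT.le]; norm_num; ring_nf
    rw [this]; ring
  have p1 : ((a : ℝ) - T) ^ (2 * H - 2) ≤ Θ ^ H * ((a : ℝ) - T) ^ (H - 2) := by
    rw [show 2 * H - 2 = H + (H - 2) by ring, Real.rpow_add haT]
    have : ((a : ℝ) - T) ≤ Θ := by linarith [a.2.2]
    gcongr
  have r2 : rbD1 (rbν t T) (fun u : Set.Icc T (T + Θ) => rbk α H (u : ℝ)) a u ≤
      4 * α ^ 2 * (((b : ℝ) - a) ^ 2 * (Θ ^ H * ((a : ℝ) - T) ^ (H - 2))) := by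
    refine e2.trans ?_
    have : 0 ≤ (u : ℝ) - a := by linarith
    gcongr
  have r3 : rbD1 (rbν t T) (fun u : Set.Icc T (T + Θ) => rbk α H (u : ℝ)) b u ≤
      4 * α ^ 2 * (((b : ℝ) - a) ^ 2 * (Θ ^ H * ((a : ℝ) - T) ^ (H - 2))) := by
    refine e3.trans ?_
    have : 0 ≤ (b : ℝ) - u := by linarith
    have p2 : ((u : ℝ) - T) ^ (2 * H - 2) ≤ ((a : ℝ) - T) ^ (2 * H - 2) :=
      Real.rpow_le_rpow_of_nonpos haT (by linarith) (by linarith)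
    have p4 : 0 ≤ ((u : ℝ) - T) ^ (2 * H - 2) := Real.rpow_nonneg (by linarith) _
    have p3 := p2.trans p1
    gcongr
  calc _ ≤ 2 * α * (((b : ℝ) - a) ^ 2 * ((a : ℝ) - T) ^ (H - 2))
        + 4 * α ^ 2 * (((b : ℝ) - a) ^ 2 * (Θ ^ H * ((a : ℝ) - T) ^ (H - 2)))
        + 4 * α ^ 2 * (((b : ℝ) - a) ^ 2 * (Θ ^ H * ((a : ℝ) - T) ^ (H - 2))) :=
        add_le_add (add_le_add r1 r2) r3
    _ = _ := by ring

lemma rb_trap_near (D : RBData μ (rbν t T) Z (fun u => rbk α H (u : ℝ)) B)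
    (hα : 0 < α) (hH0 : 0 < H) (hH : H ≤ 1 / 2) (htT : t ≤ T)
    {θ : ℝ} (h0 : 0 ≤ θ) (h1 : θ ≤ 1) (a b u : Set.Icc T (T + Θ))
    (hau : (a : ℝ) ≤ u) (hub : (u : ℝ) ≤ b) :
    ∫ z, |θ * exp (Z a z) + (1 - θ) * exp (Z b z) - exp (Z u z)| ∂μ ≤
      rbK B * (√(2 * (4 * α ^ 2 / (2 * H))) + 2 * (4 * α ^ 2 / (2 * H)) * Θ ^ H)
        * ((b : ℝ) - T) ^ H := by
  have hB := D.B_nonneg u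
  have hK := rbK_nonneg hB
  have hbT : 0 ≤ (b : ℝ) - T := by linarith [b.2.1]
  have hbΘ : (b : ℝ) - T ≤ Θ := by linarith [b.2.2]
  have haT := a.2.1
  set c := 4 * α ^ 2 / (2 * H) with hc
  have hc0 : 0 < c := by positivity
  have e2 : rbD1 (rbν t T) (fun u : Set.Icc T (T + Θ) => rbk α H (u : ℝ)) a u ≤
      c * ((b : ℝ) - T) ^ (2 * H) := by
    refine (rbk_D1_a hα hH0 hH htT haT hau).trans ?_
    refine mul_le_mul_of_nonneg_left ?_ hc0.le
    exact Real.rpow_le_rpow (by linarith) (by linarith) (by linarith)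
  have e3 : rbD1 (rbν t T) (fun u : Set.Icc T (T + Θ) => rbk α H (u : ℝ)) b u ≤
      c * ((b : ℝ) - T) ^ (2 * H) := by
    refine (rbD1_symm b u).trans_le ((rbk_D1_a hα hH0 hH htT (haT.trans hau) hub).trans ?_)
    refine mul_le_mul_of_nonneg_left ?_ hc0.le
    exact Real.rpow_le_rpow (by linarith) (by linarith) (by linarith)
  have e1 := D.D2_le h0 h1 a b u
  have hsq : ((b : ℝ) - T) ^ (2 * H) = (((b : ℝ) - T) ^ H) ^ 2 := by
    rw [← Real.rpow_mul_natCast hbT]; norm_num; ring_nf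
  set y := ((b : ℝ) - T) ^ H with hy
  have hy0 : 0 ≤ y := by positivity
  have hyΘ : y ≤ Θ ^ H := Real.rpow_le_rpow hbT hbΘ hH0.le
  rw [hsq] at e2 e3
  refine (D.main h0 h1 a b u).trans ?_
  change rbK B * _ ≤ _
  rw [mul_assoc]
  refine mul_le_mul_of_nonneg_left ?_ hK
  have r1 : √(rbD2 (rbν t T) (fun u : Set.Icc T (T + Θ) => rbk α H (u : ℝ)) θ a b u) ≤
      √(2 * c) * y := by
    have : √(2 * c) * y = √(2 * c * y ^ 2) := by
      rw [Real.sqrt_mul (by positivity : 0 ≤ 2 * c), Real.sqrt_sq hy0]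
    rw [this]
    apply Real.sqrt_le_sqrt
    linarith
  have r2 : c * y ^ 2 ≤ c * (Θ ^ H * y) := by rw [sq]; gcongr
  nlinarith

lemma rb_rect (D : RBData μ (rbν t T) Z (fun u => rbk α H (u : ℝ)) B) (a u : Set.Icc T (T + Θ)) :
    ∫ z, |exp (Z a z) - exp (Z u z)| ∂μ ≤
      rbK B * (1 + 2 * √(4 * B)) * √(rbD1 (rbν t T) (rbk α H) (a : ℝ) u) := by
  have h := D.main (θ := 1) zero_le_one le_rfl a a u
  have hB := D.B_nonneg u
  have hK := rbK_nonneg hB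
  simp only [one_mul, sub_self, zero_mul, add_zero] at h
  refine h.trans ?_
  change rbK B * _ ≤ _
  rw [mul_assoc]
  refine mul_le_mul_of_nonneg_left ?_ hK
  have e1 : rbD2 (rbν t T) (fun u : Set.Icc T (T + Θ) => rbk α H (u : ℝ)) 1 a a u
     = rbD1 (rbν t T) (rbk α H) (a : ℝ) u := by
    unfold rbD1 rbD2; congr 1; ext s; ring
  have e2 : rbD1 (rbν t T) (fun u : Set.Icc T (T + Θ) => rbk α H (u : ℝ)) a u
     = rbD1 (rbν t T) (rbk α H) (a : ℝ) u := rfl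
  have h4 := D.D1_le a u
  rw [e1, e2]
  rw [e2] at h4
  have n := rbD1_nonneg (ν := rbν t T) (φ := rbk α H) (a : ℝ) u
  set d := rbD1 (rbν t T) (rbk α H) (a : ℝ) u
  have s1 : √d ≤ √(4 * B) := Real.sqrt_le_sqrt h4
  have s2 : √d * √d = d := Real.mul_self_sqrt n
  nlinarith [Real.sqrt_nonneg d]

lemma rb_rect_near (D : RBData μ (rbν t T) Z (fun u => rbk α H (u : ℝ)) B)
    (hα : 0 < α) (hH0 : 0 < H) (hH : H ≤ 1 / 2) (htT : t ≤ T)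
    (a u : Set.Icc T (T + Θ)) (hau : (a : ℝ) ≤ u) :
    ∫ z, |exp (Z a z) - exp (Z u z)| ∂μ ≤
      rbK B * (1 + 2 * √(4 * B)) * √(4 * α ^ 2 / (2 * H)) * ((u : ℝ) - a) ^ H := by
  refine (rb_rect D a u).trans ?_
  have hK := rbK_nonneg (D.B_nonneg u)
  have hua : 0 ≤ (u : ℝ) - a := by linarith
  rw [mul_assoc (rbK B * (1 + 2 * √(4 * B)))]
  refine mul_le_mul_of_nonneg_left ?_ (by positivity)
  refine (Real.sqrt_le_sqrt (rbk_D1_a hα hH0 hH htT a.2.1 hau)).trans (le_of_eq ?_)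
  have hsq : ((u : ℝ) - a) ^ (2 * H) = (((u : ℝ) - a) ^ H) ^ 2 := by
    rw [← Real.rpow_mul_natCast hua]; norm_num; ring_nf
  rw [hsq, Real.sqrt_mul (by positivity), Real.sqrt_sq (by positivity)]

lemma rb_rect_far (D : RBData μ (rbν t T) Z (fun u => rbk α H (u : ℝ)) B)
    (hα : 0 < α) (hH0 : 0 < H) (hH : H ≤ 1 / 2) (htT : t ≤ T)
    (a u : Set.Icc T (T + Θ)) (ha : T < (a : ℝ)) (hau : (a : ℝ) ≤ u) :
    ∫ z, |exp (Z a z) - exp (Z u z)| ∂μ ≤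
      rbK B * (1 + 2 * √(4 * B)) * (2 * α) * (((u : ℝ) - a) * ((a : ℝ) - T) ^ (H - 1)) := by
  refine (rb_rect D a u).trans ?_
  have hK := rbK_nonneg (D.B_nonneg u)
  have hua : 0 ≤ (u : ℝ) - a := by linarith
  have haT : 0 < (a : ℝ) - T := by linarith
  rw [mul_assoc (rbK B * (1 + 2 * √(4 * B)))]
  refine mul_le_mul_of_nonneg_left ?_ (by positivity)
  have hsq : ((a : ℝ) - T) ^ (2 * H - 2) = (((a : ℝ) - T) ^ (H - 1)) ^ 2 := by
    rw [← Real.rpow_mul_natCast haT.le]; norm_num; ring_nf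
  apply Real.sqrt_le_iff.2 ⟨by positivity, (rbk_D1_b hH0 hH htT ha hau).trans (le_of_eq ?_)⟩
  rw [hsq]; ring

end

/-- Reduction of the Monte Carlo error to a pointwise `L¹` error. -/
lemma rb_mc {Ω : Type*} [MeasurableSpace Ω] {μ : Measure Ω} [IsProbabilityMeasure μ]
    {ν : Measure ℝ} [SFinite ν] {f : ℝ → ℝ} {L : ℝ≥0} (hf : LipschitzWith L f) {c : ℝ} (hc : 0 ≤ c)
    {G₁ G₂ : Ω × ℝ → ℝ} (h₁ : Integrable G₁ (μ.prod ν)) (h₂ : Integrable G₂ (μ.prod ν))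
    {g : ℝ → ℝ} (hg : Integrable g ν)
    (hb : ∀ᵐ u ∂ν, ∫ z, |G₁ (z, u) - G₂ (z, u)| ∂μ ≤ g u) :
    |∫ z, f (c * ∫ u, G₁ (z, u) ∂ν) ∂μ - ∫ z, f (c * ∫ u, G₂ (z, u) ∂ν) ∂μ|
      ≤ L * c * ∫ u, g u ∂ν := by
  have i1 := h₁.integral_prod_left
  have i2 := h₂.integral_prod_left
  have hfc := hf.continuous
  have intf : ∀ A : Ω → ℝ, Integrable A μ → Integrable (fun z => f (c * A z)) μ := by
    intro A hA
    have h3 : Integrable (fun z => |f 0| + L * (c * |A z|)) μ :=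
      (integrable_const _).add ((hA.abs.const_mul c).const_mul (L : ℝ))
    refine h3.mono' (hfc.comp_aestronglyMeasurable (hA.1.const_mul c)) ?_
    refine Filter.Eventually.of_forall fun z => ?_
    have := hf.dist_le_mul (c * A z) 0
    rw [Real.dist_eq, Real.dist_eq, sub_zero, abs_mul, abs_of_nonneg hc] at this
    rw [Real.norm_eq_abs]
    have h4 := abs_sub_abs_le_abs_sub (f (c * A z)) (f 0)
    linarith
  rw [← integral_sub (intf _ i1) (intf _ i2)]
  have h12 : Integrable (fun p => |G₁ p - G₂ p|) (μ.prod ν) := (h₁.sub h₂).abs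
  have i12 := h12.integral_prod_left
  calc _ ≤ ∫ z, |f (c * ∫ u, G₁ (z, u) ∂ν) - f (c * ∫ u, G₂ (z, u) ∂ν)| ∂μ :=
        abs_integral_le_integral_abs
    _ ≤ ∫ z, L * c * ∫ u, |G₁ (z, u) - G₂ (z, u)| ∂ν ∂μ := by
        apply integral_mono_of_nonneg (Filter.Eventually.of_forall fun s => abs_nonneg _)
          (i12.const_mul _)
        filter_upwards [h₁.prod_right_ae, h₂.prod_right_ae] with z hz1 hz2
        have := hf.dist_le_mul (c * ∫ u, G₁ (z, u) ∂ν) (c * ∫ u, G₂ (z, u) ∂ν)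
        rw [Real.dist_eq, Real.dist_eq, ← mul_sub, abs_mul, abs_of_nonneg hc,
          ← integral_sub hz1 hz2] at this
        refine this.trans ?_
        rw [mul_assoc]
        gcongr
        exact abs_integral_le_integral_abs
    _ = L * c * ∫ u, ∫ z, |G₁ (z, u) - G₂ (z, u)| ∂μ ∂ν := by
        rw [integral_const_mul, integral_integral_swap h12]
    _ ≤ _ := by
        exact mul_le_mul_of_nonneg_left (integral_mono_ae h12.integral_prod_right hg hb)
          (by positivity)

section
variable {T Θ : ℝ} [MeasurableSpace C(Set.Icc T (T + Θ), ℝ)] [BorelSpace C(Set.Icc T (T + Θ), ℝ)]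
  {μ : Measure C(Set.Icc T (T + Θ), ℝ)} [IsProbabilityMeasure μ]

lemma rb_joint_meas (h : T ≤ T + Θ) {e : ℝ → ℝ} (he : Measurable e) :
    Measurable (fun p : C(Set.Icc T (T + Θ), ℝ) × ℝ => exp (p.1 (Set.projIcc T (T + Θ) h (e p.2)))) := by
  have h1 : Continuous (fun p : C(Set.Icc T (T + Θ), ℝ) × Set.Icc T (T + Θ) => p.1 p.2) :=
    continuous_eval
  have h2 : Measurable (fun p : C(Set.Icc T (T + Θ), ℝ) × ℝ =>
      (p.1, Set.projIcc T (T + Θ) h (e p.2))) :=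
    measurable_fst.prodMk (continuous_projIcc.measurable.comp (he.comp measurable_snd))
  exact Real.measurable_exp.comp (h1.measurable.comp h2)

lemma rb_prod_integrable {ν : Measure ℝ} {φ : Set.Icc T (T + Θ) → ℝ → ℝ} {B : ℝ}
    (D : RBData μ ν (fun u (z : C(Set.Icc T (T + Θ), ℝ)) => z u) φ B)
    (h : T ≤ T + Θ) {e y : ℝ → ℝ} (he : Measurable e) (hy : Measurable y) {M : ℝ}
    (hM : ∀ᵐ u ∂(volume.restrict (Set.Icc T (T + Θ))), |y u| ≤ M) :
    Integrable (fun p : C(Set.Icc T (T + Θ), ℝ) × ℝ =>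
      y p.2 * exp (p.1 (Set.projIcc T (T + Θ) h (e p.2))))
      (μ.prod (volume.restrict (Set.Icc T (T + Θ)))) := by
  have hexp : Integrable (fun p : C(Set.Icc T (T + Θ), ℝ) × ℝ =>
      exp (p.1 (Set.projIcc T (T + Θ) h (e p.2)))) (μ.prod (volume.restrict (Set.Icc T (T + Θ)))) := by
    have hm := (rb_joint_meas h he)
    rw [integrable_prod_iff' hm.aestronglyMeasurable]
    have hexpI : ∀ u, Integrable (fun z : C(Set.Icc T (T + Θ), ℝ) => exp (z u)) μ := fun u =>
      (D.exp_memLp u).integrable (by norm_num)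
    refine ⟨Filter.Eventually.of_forall fun u => hexpI (Set.projIcc T (T + Θ) h (e u)), ?_⟩
    have hbd : Integrable (fun _ : ℝ => 1 + exp B) (volume.restrict (Set.Icc T (T + Θ))) :=
      integrable_const _
    refine hbd.mono' (hm.norm.stronglyMeasurable.integral_prod_left').aestronglyMeasurable ?_
    refine Filter.Eventually.of_forall fun u => ?_
    rw [Real.norm_eq_abs, abs_of_nonneg (integral_nonneg fun _ => norm_nonneg _)]
    set w := Set.projIcc T (T + Θ) h (e u)
    calc ∫ z : C(Set.Icc T (T + Θ), ℝ), ‖exp (z w)‖ ∂μ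
        ≤ ∫ z : C(Set.Icc T (T + Θ), ℝ), (1 + exp (z w) ^ 2) ∂μ := by
          apply integral_mono (hexpI w).norm ((integrable_const _).add (D.exp2_integrable w))
          intro z
          change ‖exp (z w)‖ ≤ 1 + exp (z w) ^ 2
          rw [Real.norm_eq_abs, abs_of_pos (exp_pos _)]
          nlinarith [sq_nonneg (exp (z w) - 1)]
      _ = 1 + ∫ z : C(Set.Icc T (T + Θ), ℝ), exp (z w) ^ 2 ∂μ := by
          rw [integral_add (integrable_const _) (D.exp2_integrable w)]; simp
      _ ≤ _ := by linarith [D.exp2 w]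
  refine hexp.bdd_mul (c := M) ((hy.comp measurable_snd).aestronglyMeasurable) ?_
  exact Measure.quasiMeasurePreserving_snd.ae hM

end

lemma rb_rect_grid {T Θ u : ℝ} {n : ℕ} (hΘ : 0 < Θ) (hn : 1 ≤ n) (hu : T < u) :
    T ≤ unifGridPoint T Θ n u ∧ unifGridPoint T Θ n u ≤ u ∧ u - unifGridPoint T Θ n u ≤ Θ / n ∧
    (unifGridPoint T Θ n u = T ∨
      (T < unifGridPoint T Θ n u ∧ (u - T) / 2 ≤ unifGridPoint T Θ n u - T)) := by
  have hn0 : (0 : ℝ) < n := by exact_mod_cast hn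
  have hw : 0 < (u - T) * n / Θ := by
    have : 0 < u - T := by linarith
    positivity
  have huw : u - T = Θ * ((u - T) * n / Θ) / n := by field_simp
  unfold unifGridPoint
  generalize hwd : (u - T) * n / Θ = w at *
  have h1 := Int.floor_le w
  have h2 := (Int.lt_floor_add_one w).le
  have h3 : 0 ≤ ⌊w⌋ := Int.floor_nonneg.2 hw.le
  have h3' : (0 : ℝ) ≤ (⌊w⌋ : ℝ) := by exact_mod_cast h3
  have e1 : Θ * (⌊w⌋ : ℝ) / n ≤ Θ * w / n := by gcongr
  have e2 : Θ * w / n ≤ Θ * ((⌊w⌋ : ℝ) + 1) / n := by gcongr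
  have e3 : Θ * ((⌊w⌋ : ℝ) + 1) / n = Θ * (⌊w⌋ : ℝ) / n + Θ / n := by ring
  have e4 : 0 ≤ Θ * (⌊w⌋ : ℝ) / n := by positivity
  refine ⟨by linarith, by linarith, by linarith, ?_⟩
  rcases h3.eq_or_lt with h | h
  · left; rw [← h]; simp
  · right
    have h4 : (1 : ℝ) ≤ (⌊w⌋ : ℝ) := by exact_mod_cast h
    have e5 : Θ * 1 / n ≤ Θ * (⌊w⌋ : ℝ) / n := by gcongr
    have e6 : 0 < Θ * 1 / n := by positivity
    rw [mul_one] at e5 e6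
    exact ⟨by linarith, by linarith⟩

lemma rb_pow_diff {κ p q : ℝ} (hκ : 1 ≤ κ) (hp : 0 ≤ p) (hpq : p ≤ q) (hq : 0 < q) :
    q ^ κ - p ^ κ ≤ κ * q ^ (κ - 1) * (q - p) := by
  have h := one_add_mul_self_le_rpow_one_add (s := p / q - 1) (by have : 0 ≤ p / q := by positivity
                                                                  linarith) hκ
  rw [add_sub_cancel, Real.div_rpow hp hq.le, le_div_iff₀ (by positivity)] at h
  rw [Real.rpow_sub_one hq.ne']
  have : (1 + κ * (p / q - 1)) * q ^ κ = q ^ κ - κ * (q ^ κ / q) * (q - p) := by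
    field_simp
    ring
  linarith

lemma rb_stretch_grid {T Θ κ u : ℝ} {n : ℕ} (hΘ : 0 < Θ) (hn : 1 ≤ n) (hκ : 1 < κ) (hu : T < u)
    (hu2 : u < T + Θ) :
    T ≤ stretchLow T Θ κ n u ∧ stretchLow T Θ κ n u ≤ u ∧ u ≤ stretchHigh T Θ κ n u ∧
    stretchHigh T Θ κ n u ≤ T + Θ ∧ stretchLow T Θ κ n u < stretchHigh T Θ κ n u ∧
    ((stretchHigh T Θ κ n u - T = Θ * (1 / (n : ℝ)) ^ κ ∧ (u - T) / Θ ≤ (1 / (n : ℝ)) ^ κ) ∨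
      (T < stretchLow T Θ κ n u ∧ Θ * (1 / 2) ^ κ * ((u - T) / Θ) ≤ stretchLow T Θ κ n u - T ∧
        stretchHigh T Θ κ n u - stretchLow T Θ κ n u ≤
          Θ * κ * 2 ^ (κ - 1) * ((u - T) / Θ) ^ (1 - 1 / κ) / n)) := by
  have hn0 : (0 : ℝ) < n := by exact_mod_cast hn
  have hκ0 : 0 < κ := by linarith
  have hy0 : 0 < (u - T) / Θ := div_pos (by linarith) hΘ
  have hy1 : (u - T) / Θ < 1 := by rw [div_lt_one hΘ]; linarith
  have huy : u - T = Θ * ((u - T) / Θ) := by field_simp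
  unfold stretchHigh stretchLow stretchIdx
  generalize hyd : (u - T) / Θ = y at *
  set w := y ^ (1 / κ) with hw
  have hw0 : 0 < w := by positivity
  have hw1 : w < 1 := Real.rpow_lt_one hy0.le hy1 (by positivity)
  have hwy : w ^ κ = y := by
    rw [hw, ← Real.rpow_mul hy0.le, one_div_mul_cancel hκ0.ne', Real.rpow_one]
  have hwy2 : w ^ (κ - 1) = y ^ (1 - 1 / κ) := by
    rw [hw, ← Real.rpow_mul hy0.le]; congr 1; field_simp
  have h1 := Int.floor_le (n * w)
  have h2 := Int.lt_floor_add_one (n * w)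
  have h3 : 0 ≤ ⌊n * w⌋ := Int.floor_nonneg.2 (by positivity)
  have h4 : ⌊n * w⌋ + 1 ≤ (n : ℤ) := by
    have : ⌊n * w⌋ < (n : ℤ) := Int.floor_lt.2 (by push_cast; nlinarith)
    omega
  generalize ⌊n * w⌋ = i at *
  have h3' : (0 : ℝ) ≤ i := by exact_mod_cast h3
  have h4' : (i : ℝ) + 1 ≤ n := by exact_mod_cast h4
  have p1 : (i : ℝ) / n ≤ w := by rw [div_le_iff₀ hn0]; linarith
  have p2 : w < ((i : ℝ) + 1) / n := by rw [lt_div_iff₀ hn0]; linarith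
  have p3 : ((i : ℝ) + 1) / n ≤ 1 := by rw [div_le_one hn0]; linarith
  have p0 : 0 ≤ (i : ℝ) / n := by positivity
  have q1 : ((i : ℝ) / n) ^ κ ≤ y := by rw [← hwy]; gcongr
  have q2 : y < (((i : ℝ) + 1) / n) ^ κ := by rw [← hwy]; gcongr
  have q3 : (((i : ℝ) + 1) / n) ^ κ ≤ 1 := Real.rpow_le_one (by positivity) p3 hκ0.le
  have q0 : 0 ≤ ((i : ℝ) / n) ^ κ := by positivity
  refine ⟨by nlinarith, by nlinarith, by nlinarith, by nlinarith, by nlinarith, ?_⟩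
  rcases h3.eq_or_lt with h | h
  · left
    rw [← h] at q2 ⊢
    simp only [Int.cast_zero, zero_add] at q2 ⊢
    exact ⟨by ring, q2.le⟩
  · right
    have h5 : (1 : ℝ) ≤ (i : ℝ) := by exact_mod_cast h
    have p4 : w / 2 ≤ (i : ℝ) / n := by
      rw [le_div_iff₀ hn0]; linarith
    have p5 : ((i : ℝ) + 1) / n ≤ 2 * w := by
      calc ((i : ℝ) + 1) / n ≤ (2 * i) / n := by gcongr; linarith
        _ = 2 * (i / n) := by ring
        _ ≤ _ := by linarith
    have q4 : (1 / 2) ^ κ * y ≤ ((i : ℝ) / n) ^ κ := by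
      rw [← hwy, ← Real.mul_rpow (by norm_num) hw0.le]
      gcongr
      linarith
    have q5 : 0 < ((i : ℝ) / n) ^ κ := by positivity
    refine ⟨by nlinarith, by nlinarith, ?_⟩
    have r1 := rb_pow_diff hκ.le p0 (p1.trans p2.le) (by positivity)
    have r2 : (((i : ℝ) + 1) / n) ^ (κ - 1) ≤ 2 ^ (κ - 1) * y ^ (1 - 1 / κ) := by
      rw [← hwy2, ← Real.mul_rpow (by norm_num) hw0.le]
      exact Real.rpow_le_rpow (by positivity) p5 (by linarith)
    have r3 : ((i : ℝ) + 1) / n - i / n = 1 / n := by ring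
    rw [r3] at r1
    calc _ = Θ * ((((i : ℝ) + 1) / n) ^ κ - ((i : ℝ) / n) ^ κ) := by ring
      _ ≤ Θ * (κ * (((i : ℝ) + 1) / n) ^ (κ - 1) * (1 / n)) := by gcongr
      _ ≤ Θ * (κ * (2 ^ (κ - 1) * y ^ (1 - 1 / κ)) * (1 / n)) := by gcongr
      _ = _ := by ring

lemma rb_unif_meas (T Θ : ℝ) (n : ℕ) : Measurable (unifGridPoint T Θ n) := by
  unfold unifGridPoint
  fun_prop

lemma rb_low_meas (T Θ κ : ℝ) (n : ℕ) : Measurable (stretchLow T Θ κ n) := by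
  unfold stretchLow stretchIdx
  fun_prop

lemma rb_high_meas (T Θ κ : ℝ) (n : ℕ) : Measurable (stretchHigh T Θ κ n) := by
  unfold stretchHigh stretchIdx
  fun_prop

lemma rb_theta_meas (T Θ κ : ℝ) (n : ℕ) : Measurable (stretchTheta T Θ κ n) := by
  have := rb_low_meas T Θ κ n
  have := rb_high_meas T Θ κ n
  unfold stretchTheta
  fun_prop

lemma rb_theta_grid {T Θ κ u : ℝ} {n : ℕ} (h1 : stretchLow T Θ κ n u ≤ u)
    (h2 : u ≤ stretchHigh T Θ κ n u) (h3 : stretchLow T Θ κ n u < stretchHigh T Θ κ n u) :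
    0 ≤ stretchTheta T Θ κ n u ∧ stretchTheta T Θ κ n u ≤ 1 ∧
    stretchTheta T Θ κ n u * stretchLow T Θ κ n u
      + (1 - stretchTheta T Θ κ n u) * stretchHigh T Θ κ n u = u := by
  unfold stretchTheta
  generalize stretchLow T Θ κ n u = a at *
  generalize stretchHigh T Θ κ n u = b at *
  have : 0 < b - a := by linarith
  refine ⟨div_nonneg (by linarith) this.le, by rw [div_le_one this]; linarith, ?_⟩
  field_simp
  ring

lemma rb_open_ae {T Θ : ℝ} : ∀ᵐ u ∂(volume.restrict (Set.Icc T (T + Θ))), T < u ∧ u < T + Θ := by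
  rw [← Measure.restrict_congr_set (Ioo_ae_eq_Icc (μ := volume) (a := T) (b := T + Θ))]
  filter_upwards [ae_restrict_mem measurableSet_Ioo] with s hs using hs

lemma rb_pow_integrable {T Θ q : ℝ} (hΘ : 0 < Θ) (hq : -1 < q) :
    Integrable (fun u => (u - T) ^ q) (volume.restrict (Set.Icc T (T + Θ))) := by
  have : IntervalIntegrable (fun x : ℝ => x ^ q) volume (T - T) (T + Θ - T) :=
    intervalIntegral.intervalIntegrable_rpow' hq
  have h2 := this.comp_sub_right T
  simp only [sub_add_cancel] at h2
  rw [intervalIntegrable_iff_integrableOn_Ioc_of_le (by linarith), ← integrableOn_Icc_iff_integrableOn_Ioc] at h2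
  exact h2

section
variable {α H t T Θ : ℝ} [MeasurableSpace C(Set.Icc T (T + Θ), ℝ)]
  [BorelSpace C(Set.Icc T (T + Θ), ℝ)]
  {μ : Measure C(Set.Icc T (T + Θ), ℝ)} [IsProbabilityMeasure μ]

lemma rb_build (hH0 : 0 < H) (hH : H ≤ 1 / 2) (htT : t ≤ T)
    (hgauss : IsGaussianMeasureOn μ)
    (hmean : ∀ u : Set.Icc T (T + Θ),
      (∫ z, z u ∂μ)
        = -2 * α ^ 2 * ∫ s in Set.Icc t T, ((u : ℝ) - s) ^ (2 * H - 1))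
    (hcov : ∀ u v : Set.Icc T (T + Θ),
      (∫ z, (z u - (-2 * α ^ 2 * ∫ s in Set.Icc t T, ((u : ℝ) - s) ^ (2 * H - 1)))
          * (z v - (-2 * α ^ 2 * ∫ s in Set.Icc t T,
              ((v : ℝ) - s) ^ (2 * H - 1))) ∂μ)
        = 4 * α ^ 2 * ∫ s in Set.Icc t T,
            ((u : ℝ) - s) ^ (H - 1 / 2) * ((v : ℝ) - s) ^ (H - 1 / 2)) :
    RBData μ (rbν t T) (fun u (z : C(Set.Icc T (T + Θ), ℝ)) => z u)
      (fun u => rbk α H (u : ℝ)) (4 * α ^ 2 * ((T - t) ^ (2 * H) / (2 * H))) := by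
  have key : ∀ u : Set.Icc T (T + Θ),
      -2 * α ^ 2 * ∫ s in Set.Icc t T, ((u : ℝ) - s) ^ (2 * H - 1)
        = -(1 / 2) * ∫ s, rbk α H (u : ℝ) s ^ 2 ∂(rbν t T) := by
    intro u
    have : ∫ s, rbk α H (u : ℝ) s ^ 2 ∂(rbν t T)
        = ∫ s, 4 * α ^ 2 * ((u : ℝ) - s) ^ (2 * H - 1) ∂(rbν t T) := by
      apply integral_congr_ae
      filter_upwards [rbν_ae] with s hs
      exact rbk_sq (by linarith [u.2.1])
    rw [this, integral_const_mul]
    unfold rbν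
    ring
  refine ⟨fun u => (ContinuousMap.evalCLM ℝ u).continuous.measurable, ?_,
    fun u => rbk_memLp hH0 htT u.2.1, ?_, ?_, fun u => rbk_bound hH0 hH htT u.2.1⟩
  · intro c₁ c₂ c₃ a b u
    exact hgauss (c₁ • ContinuousMap.evalCLM ℝ a + c₂ • ContinuousMap.evalCLM ℝ b
      + c₃ • ContinuousMap.evalCLM ℝ u)
  · intro u
    rw [← key]; exact hmean u
  · intro u v
    have h := hcov u v
    rw [key u, key v] at h
    refine h.trans ?_
    rw [← integral_const_mul]
    unfold rbν rbk
    congr 1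
    ext s
    ring

variable {B : ℝ}

lemma rb_rect_pt
    (D : RBData μ (rbν t T) (fun u (z : C(Set.Icc T (T + Θ), ℝ)) => z u)
      (fun u => rbk α H (u : ℝ)) B)
    (hα : 0 < α) (hH0 : 0 < H) (hH : H ≤ 1 / 2) (htT : t ≤ T) (hΘ : 0 < Θ) (h : T ≤ T + Θ) :
    ∃ C : ℝ, 0 ≤ C ∧ ∀ n : ℕ, 1 ≤ n → ∀ u, T < u → u < T + Θ →
      ∫ z, |exp (z (Set.projIcc T (T + Θ) h (unifGridPoint T Θ n u)))
        - exp (z (Set.projIcc T (T + Θ) h u))| ∂μ ≤ C * (u - T) ^ (H - 1) / n := by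
  set K₁ := rbK B * (1 + 2 * √(4 * B)) * √(4 * α ^ 2 / (2 * H)) with hK₁
  set K₂ := rbK B * (1 + 2 * √(4 * B)) * (2 * α) with hK₂
  have hBn : 0 ≤ B := D.B_nonneg ⟨T, le_refl _, h⟩
  have hK := rbK_nonneg hBn
  have k1 : 0 ≤ K₁ := by positivity
  have k2 : 0 ≤ K₂ := by positivity
  refine ⟨K₁ * Θ + K₂ * Θ * (1 / 2) ^ (H - 1), by positivity, ?_⟩
  intro n hn u hu1 hu2
  have hn0 : (0 : ℝ) < n := by exact_mod_cast hn
  obtain ⟨g1, g2, g3, g4⟩ := rb_rect_grid (n := n) hΘ hn hu1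
  have hut : 0 < u - T := by linarith
  rw [Set.projIcc_of_mem h ⟨g1, by linarith⟩, Set.projIcc_of_mem h (x := u) ⟨hu1.le, hu2.le⟩]
  generalize unifGridPoint T Θ n u = a at *
  have s1 : 0 ≤ K₁ * Θ * (u - T) ^ (H - 1) / n := by positivity
  have s2 : 0 ≤ K₂ * Θ * (1 / 2) ^ (H - 1) * (u - T) ^ (H - 1) / n := by positivity
  have s3 : (K₁ * Θ + K₂ * Θ * (1 / 2) ^ (H - 1)) * (u - T) ^ (H - 1) / n
    = K₁ * Θ * (u - T) ^ (H - 1) / n + K₂ * Θ * (1 / 2) ^ (H - 1) * (u - T) ^ (H - 1) / n := by ring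
  rw [s3]
  rcases g4 with g4 | ⟨g4, g5⟩
  · have := rb_rect_near D hα hH0 hH htT ⟨a, g1, by linarith⟩ ⟨u, hu1.le, hu2.le⟩ g2
    refine this.trans ?_
    simp only [← hK₁]
    have : (u - a) ^ H = (u - a) * (u - T) ^ (H - 1) := by
      rw [g4, Real.rpow_sub_one hut.ne']; field_simp
    rw [this]
    have : K₁ * ((u - a) * (u - T) ^ (H - 1)) ≤ K₁ * (Θ / n * (u - T) ^ (H - 1)) := by gcongr
    have e : K₁ * (Θ / n * (u - T) ^ (H - 1)) = K₁ * Θ * (u - T) ^ (H - 1) / n := by ring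
    linarith
  · have := rb_rect_far D hα hH0 hH htT ⟨a, g1, by linarith⟩ ⟨u, hu1.le, hu2.le⟩ g4 g2
    refine this.trans ?_
    simp only [← hK₂]
    have q : (a - T) ^ (H - 1) ≤ (1 / 2) ^ (H - 1) * (u - T) ^ (H - 1) := by
      rw [← Real.mul_rpow (by norm_num) hut.le]
      exact Real.rpow_le_rpow_of_nonpos (by positivity) (by linarith) (by linarith)
    have : K₂ * ((u - a) * (a - T) ^ (H - 1)) ≤
        K₂ * (Θ / n * ((1 / 2) ^ (H - 1) * (u - T) ^ (H - 1))) := by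
      have : 0 ≤ u - a := by linarith
      have : 0 < a - T := by linarith
      gcongr
    have e : K₂ * (Θ / n * ((1 / 2) ^ (H - 1) * (u - T) ^ (H - 1)))
      = K₂ * Θ * (1 / 2) ^ (H - 1) * (u - T) ^ (H - 1) / n := by ring
    linarith

lemma rb_trap_pt
    (D : RBData μ (rbν t T) (fun u (z : C(Set.Icc T (T + Θ), ℝ)) => z u)
      (fun u => rbk α H (u : ℝ)) B)
    (hα : 0 < α) (hH0 : 0 < H) (hH : H ≤ 1 / 2) (htT : t ≤ T) (hΘ : 0 < Θ) (h : T ≤ T + Θ)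
    {κ : ℝ} (hκ : 1 < κ) :
    ∃ C : ℝ, 0 ≤ C ∧ ∀ n : ℕ, 1 ≤ n → ∀ u, T < u → u < T + Θ →
      ∫ z, |stretchTheta T Θ κ n u * exp (z (Set.projIcc T (T + Θ) h (stretchLow T Θ κ n u)))
        + (1 - stretchTheta T Θ κ n u)
          * exp (z (Set.projIcc T (T + Θ) h (stretchHigh T Θ κ n u)))
        - exp (z (Set.projIcc T (T + Θ) h u))| ∂μ
      ≤ C * (1 + ((u - T) / Θ) ^ (H - 2 / κ)) / n ^ 2 := by
  set K₁ := rbK B * (√(2 * (4 * α ^ 2 / (2 * H))) + 2 * (4 * α ^ 2 / (2 * H)) * Θ ^ H) with hK₁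
  set K₂ := rbK B * (2 * α + 8 * α ^ 2 * Θ ^ H) with hK₂
  have hBn : 0 ≤ B := D.B_nonneg ⟨T, le_refl _, h⟩
  have hK := rbK_nonneg hBn
  have hκ0 : 0 < κ := by linarith
  have k1 : 0 ≤ K₁ := by positivity
  have k2 : 0 ≤ K₂ := by positivity
  set K₃ := K₂ * ((Θ * κ * 2 ^ (κ - 1)) ^ 2 * (Θ * (1 / 2) ^ κ) ^ (H - 2)) with hK₃
  have k3 : 0 ≤ K₃ := by positivity
  refine ⟨K₁ * Θ ^ H + K₃, by positivity, ?_⟩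
  intro n hn u hu1 hu2
  have hn0 : (0 : ℝ) < n := by exact_mod_cast hn
  have hn1 : (1 : ℝ) ≤ n := by exact_mod_cast hn
  obtain ⟨g1, g2, g3, g4, g5, g6⟩ := rb_stretch_grid (n := n) hΘ hn hκ hu1 hu2
  obtain ⟨t0, t1, t2⟩ := rb_theta_grid g2 g3 g5
  have hy : 0 < (u - T) / Θ := div_pos (by linarith) hΘ
  rw [Set.projIcc_of_mem h ⟨g1, by linarith⟩, Set.projIcc_of_mem h (x := u) ⟨hu1.le, hu2.le⟩,
    Set.projIcc_of_mem h (x := stretchHigh T Θ κ n u) ⟨by linarith, g4⟩]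
  generalize stretchTheta T Θ κ n u = θ at *
  generalize stretchLow T Θ κ n u = a at *
  generalize stretchHigh T Θ κ n u = b at *
  generalize (u - T) / Θ = y at *
  have s1 : 0 ≤ K₁ * Θ ^ H * (1 + y ^ (H - 2 / κ)) / n ^ 2 := by positivity
  have s2 : 0 ≤ K₃ * (1 + y ^ (H - 2 / κ)) / n ^ 2 := by positivity
  have s3 : (K₁ * Θ ^ H + K₃) * (1 + y ^ (H - 2 / κ)) / n ^ 2
    = K₁ * Θ ^ H * (1 + y ^ (H - 2 / κ)) / n ^ 2 + K₃ * (1 + y ^ (H - 2 / κ)) / n ^ 2 := by ring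
  rw [s3]
  rcases g6 with ⟨g6, g7⟩ | ⟨g6, g7, g8⟩
  · have := rb_trap_near D hα hH0 hH htT t0 t1 ⟨a, g1, by linarith⟩ ⟨b, by linarith, g4⟩
      ⟨u, hu1.le, hu2.le⟩ g2 g3
    refine this.trans ?_
    simp only [← hK₁]
    rw [g6, Real.mul_rpow hΘ.le (by positivity)]
    have q : ((1 / (n : ℝ)) ^ κ) ^ H ≤ (1 + y ^ (H - 2 / κ)) / n ^ 2 := by
      have e1 : (((1 / (n : ℝ)) ^ κ) ^ H : ℝ) = ((1 / (n : ℝ)) ^ κ) ^ (H - 2 / κ) / n ^ 2 := by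
        rw [eq_div_iff (by positivity), ← Real.rpow_mul (by positivity),
          ← Real.rpow_mul (by positivity)]
        have : κ * (H - 2 / κ) = κ * H - 2 := by field_simp
        rw [this, Real.rpow_sub (by positivity), Real.rpow_two]
        field_simp
      rw [e1]
      gcongr
      have m0 : 0 < (1 / (n : ℝ)) ^ κ := by positivity
      have m1 : (1 / (n : ℝ)) ^ κ ≤ 1 :=
        Real.rpow_le_one (by positivity) (by rw [div_le_one hn0]; exact hn1) hκ0.le
      have m2 : 0 < y ^ (H - 2 / κ) := by positivity
      rcases le_total 0 (H - 2 / κ) with hs | hs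
      · have := Real.rpow_le_one m0.le m1 hs
        linarith
      · have := Real.rpow_le_rpow_of_nonpos hy g7 hs
        linarith
    have : K₁ * (Θ ^ H * ((1 / (n : ℝ)) ^ κ) ^ H) ≤
      K₁ * (Θ ^ H * ((1 + y ^ (H - 2 / κ)) / n ^ 2)) := by gcongr
    have e : K₁ * (Θ ^ H * ((1 + y ^ (H - 2 / κ)) / n ^ 2)) =
      K₁ * Θ ^ H * (1 + y ^ (H - 2 / κ)) / n ^ 2 := by ring
    linarith
  · have := rb_trap_far D hα hH0 hH htT t0 t1 ⟨a, g1, by linarith⟩ ⟨b, by linarith, g4⟩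
      ⟨u, hu1.le, hu2.le⟩ g6 g2 g3 t2
    refine this.trans ?_
    simp only [← hK₂]
    have q1 : (a - T) ^ (H - 2) ≤ (Θ * (1 / 2) ^ κ) ^ (H - 2) * y ^ (H - 2) := by
      rw [← Real.mul_rpow (by positivity) hy.le]
      exact Real.rpow_le_rpow_of_nonpos (by positivity) g7 (by linarith)
    have q2 : (b - a) ^ 2 ≤ (Θ * κ * 2 ^ (κ - 1) * y ^ (1 - 1 / κ) / n) ^ 2 := by
      have : 0 ≤ b - a := by linarith
      gcongr
    have q3 : (y ^ (1 - 1 / κ)) ^ 2 * y ^ (H - 2) = y ^ (H - 2 / κ) := by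
      rw [← Real.rpow_mul_natCast hy.le, ← Real.rpow_add hy]
      congr 1
      push_cast
      ring
    have q0 : 0 < a - T := by linarith
    have : K₂ * ((b - a) ^ 2 * (a - T) ^ (H - 2)) ≤
        K₂ * ((Θ * κ * 2 ^ (κ - 1) * y ^ (1 - 1 / κ) / n) ^ 2 *
          ((Θ * (1 / 2) ^ κ) ^ (H - 2) * y ^ (H - 2))) := by gcongr
    have e : K₂ * ((Θ * κ * 2 ^ (κ - 1) * y ^ (1 - 1 / κ) / n) ^ 2 *
          ((Θ * (1 / 2) ^ κ) ^ (H - 2) * y ^ (H - 2))) = K₃ * y ^ (H - 2 / κ) / n ^ 2 := by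
      rw [hK₃, ← q3]; ring
    have e2 : K₃ * (1 + y ^ (H - 2 / κ)) / n ^ 2 = K₃ / n ^ 2 + K₃ * y ^ (H - 2 / κ) / n ^ 2 := by
      ring
    have e3 : 0 ≤ K₃ / (n : ℝ) ^ 2 := by positivity
    linarith

end

/-- Monte Carlo convergence rates in the rough Bergomi model, with kernel
`g(u,s) = α(u−s)^{H−1/2}`: (i) the rectangle scheme on the uniform grid converges at
rate `O(1/n)`; (ii) the trapezoidal scheme on the stretched grid `tᵢⁿ = T + Θ(i/n)^κ`
with `κ(H+1) > 2` converges at rate `O(1/n²)`. -/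
theorem rough_bergomi_monte_carlo_rates
    (α H t T Θ : ℝ) (hα : 0 < α) (hH0 : 0 < H) (hH : H ≤ 1 / 2)
    (ht : 0 ≤ t) (htT : t ≤ T) (hΘ : 0 < Θ)
    [MeasurableSpace C(Set.Icc T (T + Θ), ℝ)] [BorelSpace C(Set.Icc T (T + Θ), ℝ)]
    (μ : Measure C(Set.Icc T (T + Θ), ℝ)) [IsProbabilityMeasure μ]
    (hgauss : IsGaussianMeasureOn μ)
    (hmean : ∀ u : Set.Icc T (T + Θ),
      (∫ z, z u ∂μ)
        = -2 * α ^ 2 * ∫ s in Set.Icc t T, ((u : ℝ) - s) ^ (2 * H - 1))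
    (hcov : ∀ u v : Set.Icc T (T + Θ),
      (∫ z, (z u - (-2 * α ^ 2 * ∫ s in Set.Icc t T, ((u : ℝ) - s) ^ (2 * H - 1)))
          * (z v - (-2 * α ^ 2 * ∫ s in Set.Icc t T,
              ((v : ℝ) - s) ^ (2 * H - 1))) ∂μ)
        = 4 * α ^ 2 * ∫ s in Set.Icc t T,
            ((u : ℝ) - s) ^ (H - 1 / 2) * ((v : ℝ) - s) ^ (H - 1 / 2))
    (f : ℝ → ℝ) (hf : ∃ L : ℝ≥0, LipschitzWith L f)
    (x : ℝ → ℝ) (hxmeas : Measurable x) (hx0 : ∀ u ∈ Set.Icc T (T + Θ), 0 ≤ x u)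
    (hxbdd : ∃ Mx, ∀ u ∈ Set.Icc T (T + Θ), x u ≤ Mx) :
    (∃ C : ℝ, ∀ n : ℕ, 1 ≤ n →
      |(∫ z, f (Θ⁻¹ * ∫ u in Set.Icc T (T + Θ),
            x u * Real.exp (z (Set.projIcc T (T + Θ) (by linarith) u))) ∂μ)
        - ∫ z, f (Θ⁻¹ * ∫ u in Set.Icc T (T + Θ),
            x u * Real.exp
              (z (Set.projIcc T (T + Θ) (by linarith) (unifGridPoint T Θ n u)))) ∂μ|
        ≤ C / n)
    ∧ ∀ κ : ℝ, 0 < κ → 2 < κ * (H + 1) →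
      ∃ C : ℝ, ∀ n : ℕ, 1 ≤ n →
        |(∫ z, f (Θ⁻¹ * ∫ u in Set.Icc T (T + Θ),
              x u * Real.exp (z (Set.projIcc T (T + Θ) (by linarith) u))) ∂μ)
          - ∫ z, f (Θ⁻¹ * ∫ u in Set.Icc T (T + Θ),
              x u * (stretchTheta T Θ κ n u
                  * Real.exp (z (Set.projIcc T (T + Θ) (by linarith)
                      (stretchLow T Θ κ n u)))
                + (1 - stretchTheta T Θ κ n u)
                  * Real.exp (z (Set.projIcc T (T + Θ) (by linarith)
                      (stretchHigh T Θ κ n u))))) ∂μ|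
          ≤ C / n ^ 2 := by
  obtain ⟨L, hL⟩ := hf
  obtain ⟨M, hM⟩ := hxbdd
  have h : T ≤ T + Θ := by linarith
  have D := rb_build hH0 hH htT hgauss hmean hcov
  have hM0 : 0 ≤ M := (hx0 T ⟨le_refl _, h⟩).trans (hM T ⟨le_refl _, h⟩)
  have hxae : ∀ᵐ u ∂(volume.restrict (Set.Icc T (T + Θ))), |x u| ≤ M := by
    filter_upwards [ae_restrict_mem measurableSet_Icc] with u hu
    rw [abs_of_nonneg (hx0 u hu)]
    exact hM u hu
  have hG₁ := rb_prod_integrable D h measurable_id hxmeas hxae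
  constructor
  · obtain ⟨C, hC0, hC⟩ := rb_rect_pt D hα hH0 hH htT hΘ h
    refine ⟨L * Θ⁻¹ * (M * C * ∫ u in Set.Icc T (T + Θ), (u - T) ^ (H - 1)), fun n hn => ?_⟩
    have hG₂ := rb_prod_integrable D h (rb_unif_meas T Θ n) hxmeas hxae
    have hg := (rb_pow_integrable (T := T) hΘ (q := H - 1) (by linarith)).const_mul (M * C / n)
    have := rb_mc hL (c := Θ⁻¹) (by positivity) hG₁ hG₂ hg (by
      filter_upwards [rb_open_ae] with u hu
      have hu' : u ∈ Set.Icc T (T + Θ) := ⟨hu.1.le, hu.2.le⟩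
      have e : ∀ z : C(Set.Icc T (T + Θ), ℝ),
          |x u * exp (z (Set.projIcc T (T + Θ) h (id u)))
            - x u * exp (z (Set.projIcc T (T + Θ) h (unifGridPoint T Θ n u)))|
          = x u * |exp (z (Set.projIcc T (T + Θ) h (unifGridPoint T Θ n u)))
            - exp (z (Set.projIcc T (T + Θ) h u))| := by
        intro z
        rw [← mul_sub, abs_mul, abs_of_nonneg (hx0 u hu'), abs_sub_comm]; rfl
      simp only [e]
      rw [integral_const_mul]
      calc _ ≤ M * (C * (u - T) ^ (H - 1) / n) :=
            mul_le_mul (hM u hu') (hC n hn u hu.1 hu.2)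
              (integral_nonneg fun _ => abs_nonneg _) hM0
        _ = _ := by ring)
    refine this.trans (le_of_eq ?_)
    rw [integral_const_mul]
    ring
  · intro κ hκ0 hκ2
    have hκ : 1 < κ := by nlinarith
    obtain ⟨C, hC0, hC⟩ := rb_trap_pt D hα hH0 hH htT hΘ h hκ
    have hq : -1 < H - 2 / κ := by
      have : 2 / κ < H + 1 := by rw [div_lt_iff₀ hκ0]; linarith
      linarith
    refine ⟨L * Θ⁻¹ * (M * C * ∫ u in Set.Icc T (T + Θ), (1 + ((u - T) / Θ) ^ (H - 2 / κ))),
      fun n hn => ?_⟩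
    have hθ : ∀ᵐ u ∂(volume.restrict (Set.Icc T (T + Θ))),
        0 ≤ stretchTheta T Θ κ n u ∧ stretchTheta T Θ κ n u ≤ 1 := by
      filter_upwards [rb_open_ae] with u hu
      obtain ⟨g1, g2, g3, g4, g5, g6⟩ := rb_stretch_grid (n := n) hΘ hn hκ hu.1 hu.2
      obtain ⟨t0, t1, t2⟩ := rb_theta_grid g2 g3 g5
      exact ⟨t0, t1⟩
    have hya : ∀ᵐ u ∂(volume.restrict (Set.Icc T (T + Θ))),
        |x u * stretchTheta T Θ κ n u| ≤ M := by
      filter_upwards [hθ, hxae] with u h1 h2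
      rw [abs_mul, abs_of_nonneg h1.1]
      nlinarith [abs_nonneg (x u)]
    have hyb : ∀ᵐ u ∂(volume.restrict (Set.Icc T (T + Θ))),
        |x u * (1 - stretchTheta T Θ κ n u)| ≤ M := by
      filter_upwards [hθ, hxae] with u h1 h2
      rw [abs_mul, abs_of_nonneg (sub_nonneg.2 h1.2)]
      nlinarith [abs_nonneg (x u)]
    have hG₂ : Integrable (fun p : C(Set.Icc T (T + Θ), ℝ) × ℝ =>
        x p.2 * (stretchTheta T Θ κ n p.2
                  * Real.exp (p.1 (Set.projIcc T (T + Θ) h (stretchLow T Θ κ n p.2)))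
                + (1 - stretchTheta T Θ κ n p.2)
                  * Real.exp (p.1 (Set.projIcc T (T + Θ) h (stretchHigh T Θ κ n p.2)))))
        (μ.prod (volume.restrict (Set.Icc T (T + Θ)))) := by
      have h1 := rb_prod_integrable D h (rb_low_meas T Θ κ n)
        (hxmeas.mul (rb_theta_meas T Θ κ n)) hya
      have h2 := rb_prod_integrable D h (rb_high_meas T Θ κ n)
        (hxmeas.mul (measurable_const.sub (rb_theta_meas T Θ κ n))) hyb
      refine (h1.add h2).congr (Filter.Eventually.of_forall fun p => ?_)
      simp only [Pi.add_apply, Pi.mul_apply, Pi.sub_apply]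
      ring
    have hg0 : Integrable (fun u => 1 + ((u - T) / Θ) ^ (H - 2 / κ))
        (volume.restrict (Set.Icc T (T + Θ))) := by
      refine (integrable_const _).add ?_
      have := (rb_pow_integrable (T := T) hΘ hq).div_const (Θ ^ (H - 2 / κ))
      refine this.congr ?_
      filter_upwards [rb_open_ae] with u hu
      rw [Real.div_rpow (by linarith) hΘ.le]
    have hg := hg0.const_mul (M * C / n ^ 2)
    have := rb_mc hL (c := Θ⁻¹) (by positivity) hG₁ hG₂ hg (by
      filter_upwards [rb_open_ae] with u hu
      have hu' : u ∈ Set.Icc T (T + Θ) := ⟨hu.1.le, hu.2.le⟩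
      have e : ∀ z : C(Set.Icc T (T + Θ), ℝ),
          |x u * exp (z (Set.projIcc T (T + Θ) h (id u)))
            - x u * (stretchTheta T Θ κ n u
                  * Real.exp (z (Set.projIcc T (T + Θ) h (stretchLow T Θ κ n u)))
                + (1 - stretchTheta T Θ κ n u)
                  * Real.exp (z (Set.projIcc T (T + Θ) h (stretchHigh T Θ κ n u))))|
          = x u * |stretchTheta T Θ κ n u
                  * Real.exp (z (Set.projIcc T (T + Θ) h (stretchLow T Θ κ n u)))
                + (1 - stretchTheta T Θ κ n u)
                  * Real.exp (z (Set.projIcc T (T + Θ) h (stretchHigh T Θ κ n u)))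
            - exp (z (Set.projIcc T (T + Θ) h u))| := by
        intro z
        rw [← mul_sub, abs_mul, abs_of_nonneg (hx0 u hu'), abs_sub_comm]; rfl
      simp only [e]
      rw [integral_const_mul]
      calc _ ≤ M * (C * (1 + ((u - T) / Θ) ^ (H - 2 / κ)) / n ^ 2) :=
            mul_le_mul (hM u hu') (hC n hn u hu.1 hu.2)
              (integral_nonneg fun _ => abs_nonneg _) hM0
        _ = _ := by ring)
    refine this.trans (le_of_eq ?_)
    rw [integral_const_mul]
    ring
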